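/- arXiv:2401.01135 — 3 statements merged into one kernel-verified Lean document; each statement's English description precedes it below -/
import Mathlib

section
/- Let q = 2, m = 2r with r ≥ 3, and n = 2^{r−1}(2^r − 1). Then the augmented code \overline{C_D} is a binary linear code of length n, dimension m + 1 and minimum distance 2^{r−1}(2^{r−1} − 1) which has locality 3, and its dual \overline{C_D}^⊥ is a binary linear code of length n, dimension n − m − 1 and minimum distance 4 which has locality 2^{r−1}(2^{r−1} − 1) − 1. -/
open scoped Classical

noncomputable section

/-- The augmented code `\overline{C_D}` of the defining set `D = {x : K // P x}`:
codewords are `(Tr_{K/F}(b d) + c)_{d ∈ D}` for `b ∈ K`, `c ∈ F`. -/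
def augCode (F K : Type*) [Field F] [Field K] [Algebra F K] (P : K → Prop) :
    Set ({x : K // P x} → F) :=
  {w | ∃ b : K, ∃ c : F, ∀ d : {x : K // P x}, w d = Algebra.trace F K (b * d.1) + c}

/-- The dual code under the standard inner product. -/
def dualCode {ι F : Type*} [Fintype ι] [CommRing F] (C : Set (ι → F)) : Set (ι → F) :=
  {u | ∀ v ∈ C, ∑ i, u i * v i = 0}

/-- `d` is the minimum distance of the code `C`: the smallest Hamming weight of a
nonzero codeword. -/
def IsMinDist {ι F : Type*} [Fintype ι] [CommRing F] (C : Set (ι → F)) (d : ℕ) : Prop :=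
  (∃ c ∈ C, c ≠ 0 ∧ hammingNorm c = d) ∧ ∀ c ∈ C, c ≠ 0 → d ≤ hammingNorm c

/-- The code `C` has locality `r`: every coordinate `i` can be recovered from some
set `R` of `r` other coordinates. -/
def HasLocality {ι F : Type*} [Fintype ι] (C : Set (ι → F)) (r : ℕ) : Prop :=
  ∀ i : ι, ∃ R : Finset ι, R.card = r ∧ i ∉ R ∧
    ∀ c₁ ∈ C, ∀ c₂ ∈ C, (∀ j ∈ R, c₁ j = c₂ j) → c₁ i = c₂ i

/-!
Put `Q(x) = Tr(N(x))` with `N : F_{2^m} → F_{2^r}` the norm `x ↦ x ^ (2 ^ r + 1)`. Its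
polarization is `Tr(a ^ (2 ^ r) x)` and every nonzero norm value is taken `2 ^ r + 1` times, so
`Q` is a bent function with Walsh transform `-2 ^ r` at `0`. For a bent function the weight of the
codeword `(Tr(b d) + c)_d`, `b ≠ 0`, on the zero set of `Q` is read off from the Walsh transform
at `b`: it takes two values, the smaller being `2 ^ (r - 1) (2 ^ (r - 1) - 1)`, and Walsh
inversion gives a codeword of this weight through each coordinate.

A set of four points of `D` with sum zero supports a word of the dual code. Such a set exists
through each point of `D`, because `Q` is additive on every `F_{2^r}`-line through the origin, so
that `D` meets the line in a group of order at least `4`. No word of the dual has weight less than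
`4`: the weights are even, since `1` is in the code, and `2` is excluded by the nondegeneracy of
the trace form. Finally, a dual codeword of weight `k + 1` through each coordinate is locality
`k`.
-/

section LinearCodes

lemma coe_dualAnnihilator_comap_dotProductEquiv {ι F : Type*} [Fintype ι] [Field F]
    (W : Submodule F (ι → F)) :
    (W.dualAnnihilator.comap (dotProductEquiv F ι).toLinearMap : Set (ι → F)) = dualCode W := by
  ext u
  exact Submodule.mem_dualAnnihilator _

lemma natCard_dualCode {ι F : Type*} [Fintype ι] [Field F] [Fintype F]
    (W : Submodule F (ι → F)) :
    Nat.card (dualCode (W : Set (ι → F))) =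
      Fintype.card F ^ (Fintype.card ι - Module.finrank F W) := by
  have hfinrank := Subspace.finrank_add_finrank_dualAnnihilator_eq W
  rw [Module.finrank_fintype_fun_eq_card] at hfinrank
  rw [← coe_dualAnnihilator_comap_dotProductEquiv, SetLike.coe_sort_coe,
    Module.natCard_eq_pow_finrank (K := F), Nat.card_eq_fintype_card,
    Submodule.comap_equiv_eq_map_symm, LinearEquiv.finrank_map_eq, ← hfinrank,
    Nat.add_sub_cancel_left]

lemma subset_dualCode_dualCode {ι F : Type*} [Fintype ι] [CommRing F] (C : Set (ι → F)) :
    C ⊆ dualCode (dualCode C) := fun v hv u hu => by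
  simpa only [mul_comm] using hu v hv

lemma hasLocality_of_exists_mem_dualCode {ι F : Type*} [Fintype ι] [CommRing F] [IsDomain F]
    {C : Set (ι → F)} {r : ℕ}
    (h : ∀ i, ∃ u ∈ dualCode C, u i ≠ 0 ∧ hammingNorm u = r + 1) : HasLocality C r := by
  intro i
  obtain ⟨u, hu, hui, hur⟩ := h i
  refine ⟨(Finset.univ.filter fun j => u j ≠ 0).erase i, ?_, by simp, ?_⟩
  · rw [Finset.card_erase_of_mem (by simpa using hui)]
    exact Nat.sub_eq_of_eq_add hur
  · intro v hv w hw hvw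
    have hdot : ∑ j, u j * (v j - w j) = 0 := by
      simp only [mul_sub, Finset.sum_sub_distrib, hu v hv, hu w hw, sub_self]
    rw [Fintype.sum_eq_single i] at hdot
    · exact sub_eq_zero.1 ((mul_eq_zero.1 hdot).resolve_left hui)
    · intro j hj
      by_cases huj : u j = 0
      · rw [huj, zero_mul]
      · rw [hvw j (by simp [hj, huj]), sub_self, mul_zero]

end LinearCodes

section BinaryWords

variable {ι F : Type*} [Fintype ι] [Field F] [Fintype F]

lemma eq_zero_or_eq_one_of_card_eq_two (hF : Fintype.card F = 2) (y : F) : y = 0 ∨ y = 1 := by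
  have huniv : ({0, 1} : Finset F) = Finset.univ :=
    Finset.eq_univ_of_card _ (by rw [Finset.card_pair zero_ne_one, hF])
  simpa [← huniv] using Finset.mem_univ y

lemma sum_mul_eq_sum_support (hF : Fintype.card F = 2) (u v : ι → F) :
    ∑ i, u i * v i = ∑ i with u i ≠ 0, v i := by
  rw [Finset.sum_filter]
  refine Finset.sum_congr rfl fun i _ => ?_
  rcases eq_zero_or_eq_one_of_card_eq_two hF (u i) with h | h <;> simp [h]

lemma even_hammingNorm_of_sum_eq_zero (hF : Fintype.card F = 2) {u : ι → F}
    (hu : ∑ i, u i = 0) : Even (hammingNorm u) := by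
  have : CharP F 2 := charP_of_card_eq_prime hF
  have hcast : (hammingNorm u : F) = 0 := by
    simpa [hu, hammingNorm] using (sum_mul_eq_sum_support hF u 1).symm
  exact even_iff_two_dvd.2 ((CharP.cast_eq_zero_iff F 2 _).1 hcast)

lemma four_le_hammingNorm_of_mem_dualCode (hF : Fintype.card F = 2) {C : Set (ι → F)}
    (hone : 1 ∈ C) (hsep : ∀ i j, i ≠ j → ∃ v ∈ C, v i ≠ v j) {u : ι → F}
    (hu : u ∈ dualCode C) (hu0 : u ≠ 0) : 4 ≤ hammingNorm u := by
  have : CharP F 2 := charP_of_card_eq_prime hF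
  obtain ⟨k, hk⟩ := even_hammingNorm_of_sum_eq_zero hF (by simpa using hu 1 hone)
  have hpos : hammingNorm u ≠ 0 := by simpa using hu0
  have hne_two : hammingNorm u ≠ 2 := by
    intro h
    obtain ⟨i, j, hij, hsupp⟩ := Finset.card_eq_two.1 h
    obtain ⟨v, hv, hvij⟩ := hsep i j hij
    have hdot := hu v hv
    rw [sum_mul_eq_sum_support hF, hsupp, Finset.sum_pair hij, CharTwo.add_eq_zero] at hdot
    exact hvij hdot
  omega

end BinaryWords

section AugmentedCode

variable (F K : Type*) [Field F] [Field K] [Algebra F K] (P : K → Prop)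

/-- The encoder of the augmented code: it sends the message `(b, c)` to the codeword
`(Tr_{K/F}(b d) + c)_{d ∈ D}`, and its range is `augCode F K P`. -/
def augEncoder : K × F →ₗ[F] ({x : K // P x} → F) where
  toFun p d := Algebra.trace F K (p.1 * d.1) + p.2
  map_add' p p' := by
    ext d
    simp only [Prod.fst_add, Prod.snd_add, add_mul, map_add, Pi.add_apply]
    ring
  map_smul' t p := by
    ext d
    simp [mul_add]

variable {F K P}

@[simp]
lemma augEncoder_apply (p : K × F) (d : {x : K // P x}) :
    augEncoder F K P p d = Algebra.trace F K (p.1 * d.1) + p.2 := rfl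

lemma coe_range_augEncoder :
    (LinearMap.range (augEncoder F K P) : Set ({x : K // P x} → F)) = augCode F K P := by
  ext w
  simp only [augCode, SetLike.mem_coe, LinearMap.mem_range, Prod.exists, Set.mem_ofPred_eq,
    funext_iff, augEncoder_apply, eq_comm]

lemma augEncoder_mem_augCode (p : K × F) : augEncoder F K P p ∈ augCode F K P :=
  ⟨p.1, p.2, fun _ => rfl⟩

lemma one_mem_augCode : 1 ∈ augCode F K P := ⟨0, 1, fun d => by simp⟩

lemma exists_mem_augCode_apply_ne [FiniteDimensional F K] [Algebra.IsSeparable F K]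
    {i j : {x : K // P x}} (hij : i ≠ j) : ∃ v ∈ augCode F K P, v i ≠ v j := by
  obtain ⟨t, ht⟩ := Algebra.trace_surjective F K 1
  have hsub : i.1 - j.1 ≠ 0 := sub_ne_zero.2 (Subtype.coe_injective.ne hij)
  refine ⟨_, augEncoder_mem_augCode (t / (i.1 - j.1), 0), fun h => one_ne_zero (α := F) ?_⟩
  rw [← ht, ← div_mul_cancel₀ t hsub, mul_sub, map_sub, sub_eq_zero]
  simpa using h

lemma indicator_mem_dualCode_augCode [Fintype K] {T : Finset K} (hTP : ∀ x ∈ T, P x)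
    (hcard : (T.card : F) = 0) (hsum : ∑ x ∈ T, x = 0) :
    (fun d => if d.1 ∈ T then 1 else 0) ∈ dualCode (augCode F K P) := by
  rintro v ⟨b, c, hv⟩
  calc ∑ d, (if d.1 ∈ T then 1 else 0) * v d
      = ∑ d ∈ T.subtype P, (Algebra.trace F K (b * d.1) + c) := by
        simp only [ite_mul, one_mul, zero_mul, hv, ← Finset.mem_subtype (p := P),
          Finset.sum_ite_mem, Finset.univ_inter]
    _ = ∑ x ∈ T, (Algebra.trace F K (b * x) + c) :=
        Finset.sum_subtype_of_mem (fun x => Algebra.trace F K (b * x) + c) hTP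
    _ = 0 := by
        rw [Finset.sum_add_distrib, ← map_sum, ← Finset.mul_sum, hsum, mul_zero, map_zero,
          Finset.sum_const, nsmul_eq_mul, hcard, zero_mul, add_zero]

lemma hammingNorm_indicator {α R : Type*} [Fintype α] [Semiring R] [Nontrivial R] {p : α → Prop}
    {T : Finset α} (hTp : ∀ x ∈ T, p x) :
    hammingNorm (fun d : {x // p x} => if d.1 ∈ T then (1 : R) else 0) = T.card := by
  have hsupp : (Finset.univ.filter fun d : {x // p x} =>
      (if d.1 ∈ T then (1 : R) else 0) ≠ 0) = T.subtype p := by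
    ext d
    simp
  rw [hammingNorm, hsupp, Finset.card_subtype, Finset.filter_true_of_mem hTp]

end AugmentedCode

section WeightFourWords

lemma exists_finset_card_eq_four_sum_eq_zero {R : Type*} [Ring R] [CharP R 2] {V : AddSubgroup R}
    [Finite V] (hV : 4 ≤ Nat.card V) {i : R} (hi : i ∈ V) :
    ∃ T : Finset R, i ∈ T ∧ T.card = 4 ∧ (∀ x ∈ T, x ∈ V) ∧ ∑ x ∈ T, x = 0 := by
  have hexists (A : Finset R) (hA : A.card ≤ 2) : ∃ x ∈ V, x ∉ A := by
    obtain ⟨x, hxV, hxA⟩ := Set.exists_mem_notMem_of_ncard_lt_ncard (s := (A : Set R)) (t := V)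
      (by rw [Set.ncard_coe_finset, ← Nat.card_coe_set_eq, SetLike.coe_sort_coe]; omega)
    exact ⟨x, hxV, hxA⟩
  obtain ⟨j, hj, hji⟩ := hexists {i} (by simp)
  obtain ⟨k, hk, hkij⟩ := hexists {i, j} Finset.card_le_two
  simp only [Finset.mem_insert, Finset.mem_singleton, not_or] at hji hkij
  obtain ⟨hki, hkj⟩ := hkij
  have hil : i ≠ i + j + k := by
    rw [add_assoc, Ne, left_eq_add, CharTwo.add_eq_zero]
    exact Ne.symm hkj
  have hjl : j ≠ i + j + k := by
    rw [add_right_comm, Ne, right_eq_add, CharTwo.add_eq_zero]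
    exact Ne.symm hki
  have hkl : k ≠ i + j + k := by
    rw [Ne, right_eq_add, CharTwo.add_eq_zero]
    exact Ne.symm hji
  refine ⟨{i, j, k, i + j + k}, by simp, ?_, ?_, ?_⟩
  · simp [Ne.symm hji, Ne.symm hki, Ne.symm hkj, hil, hjl, hkl]
  · simp [hi, hj, hk, V.add_mem (V.add_mem hi hj) hk]
  · rw [Finset.sum_insert (by simp [Ne.symm hji, Ne.symm hki, hil]),
      Finset.sum_insert (by simp [Ne.symm hkj, hjl]), Finset.sum_pair hkl, ← add_assoc, ← add_assoc,
      CharTwo.add_self_eq_zero]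

variable {F K : Type*} [Field F] [Field K] [Fintype K] [Algebra F K] {P : K → Prop}

lemma exists_mem_dualCode_augCode_hammingNorm_eq_four [CharP F 2] {V : AddSubgroup K}
    (hV : 4 ≤ Nat.card V) (hVP : ∀ x ∈ V, P x) {i : {x : K // P x}} (hi : i.1 ∈ V) :
    ∃ u ∈ dualCode (augCode F K P), u i ≠ 0 ∧ hammingNorm u = 4 := by
  have : CharP K 2 := charP_of_injective_algebraMap (algebraMap F K).injective 2
  obtain ⟨T, hiT, hcard, hTV, hsum⟩ := exists_finset_card_eq_four_sum_eq_zero hV hi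
  have hTP : ∀ x ∈ T, P x := fun x hx => hVP x (hTV x hx)
  have hcast : (T.card : F) = 0 := (CharP.cast_eq_zero_iff F 2 _).2 (by rw [hcard]; norm_num)
  exact ⟨_, indicator_mem_dualCode_augCode hTP hcast hsum, by simp [hiT],
    (hammingNorm_indicator hTP).trans hcard⟩

lemma hasLocality_augCode [CharP F 2]
    (hP : ∀ i, P i → ∃ V : AddSubgroup K, i ∈ V ∧ 4 ≤ Nat.card V ∧ ∀ x ∈ V, P x) :
    HasLocality (augCode F K P) 3 := by
  refine hasLocality_of_exists_mem_dualCode fun i => ?_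
  obtain ⟨V, hi, hV, hVP⟩ := hP i i.2
  exact exists_mem_dualCode_augCode_hammingNorm_eq_four hV hVP hi

lemma isMinDist_dualCode_augCode [Fintype F] (hF : Fintype.card F = 2) {V : AddSubgroup K}
    (hV : 4 ≤ Nat.card V) (hVP : ∀ x ∈ V, P x) :
    IsMinDist (dualCode (augCode F K P)) 4 := by
  have : CharP F 2 := charP_of_card_eq_prime hF
  obtain ⟨u, hu, hu0, hu4⟩ := exists_mem_dualCode_augCode_hammingNorm_eq_four (F := F) hV hVP
    (i := ⟨0, hVP 0 V.zero_mem⟩) V.zero_mem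
  exact ⟨⟨u, hu, fun h => hu0 (congrFun h _), hu4⟩, fun w hw hw0 =>
    four_le_hammingNorm_of_mem_dualCode hF one_mem_augCode
      (fun _ _ hij => exists_mem_augCode_apply_ne hij) hw hw0⟩

end WeightFourWords

section WalshTransform

variable {F : Type*} [Field F] [Fintype F] (hF : Fintype.card F = 2)

/-- The nontrivial additive character of the field with two elements, with values `±1` in `ℤ`,
used to turn weights and cardinalities into character sums. -/
def signChar : AddChar F ℤ where
  toFun y := if y = 0 then 1 else -1
  map_zero_eq_one' := if_pos rfl
  map_add_eq_mul' x y := by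
    have : CharP F 2 := charP_of_card_eq_prime hF
    rcases eq_zero_or_eq_one_of_card_eq_two hF x with rfl | rfl <;>
      rcases eq_zero_or_eq_one_of_card_eq_two hF y with rfl | rfl <;>
      simp [CharTwo.add_self_eq_zero]

lemma signChar_apply (y : F) : signChar hF y = if y = 0 then 1 else -1 := rfl

lemma signChar_one : signChar hF 1 = -1 := if_neg one_ne_zero

lemma signChar_mul_self (y : F) : signChar hF y * signChar hF y = 1 := by
  rw [signChar_apply]
  split_ifs <;> norm_num

lemma sum_signChar {ι : Type*} [Fintype ι] (w : ι → F) :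
    ∑ i, signChar hF (w i) = Fintype.card ι - 2 * hammingNorm w := by
  have hsign (y : F) : signChar hF y = 1 - 2 * if y ≠ 0 then 1 else 0 := by
    by_cases hy : y = 0 <;> simp [signChar_apply, hy]
  simp only [hsign, Finset.sum_sub_distrib, ← Finset.mul_sum, Finset.sum_boole, hammingNorm,
    Finset.sum_const, Finset.card_univ, nsmul_eq_mul, mul_one]

lemma two_mul_sum_zeros {α : Type*} [Fintype α] (Q : α → F) (f : α → ℤ) :
    2 * ∑ d : {x // Q x = 0}, f d = ∑ x, f x + ∑ x, signChar hF (Q x) * f x := by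
  rw [← Finset.sum_subtype (Finset.univ.filter fun x => Q x = 0) (by simp) f, Finset.sum_filter,
    Finset.mul_sum, ← Finset.sum_add_distrib]
  refine Finset.sum_congr rfl fun x _ => ?_
  by_cases hx : Q x = 0 <;> simp [signChar_apply, hx, two_mul]

variable {K : Type*} [Field K] [Fintype K] [Algebra F K]

lemma sum_signChar_trace_mul (b : K) :
    ∑ x : K, signChar hF (Algebra.trace F K (b * x)) =
      if b = 0 then (Fintype.card K : ℤ) else 0 := by
  let χ : AddChar K ℤ := (signChar hF).compAddMonoidHom (Algebra.trace F K).toAddMonoidHom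
  have hχ : χ ≠ 1 := by
    obtain ⟨t, ht⟩ := Algebra.trace_surjective F K 1
    refine AddChar.ne_one_iff.2 ⟨t, ?_⟩
    change signChar hF (Algebra.trace F K t) ≠ 1
    rw [ht, signChar_one]
    norm_num
  simpa [χ, mul_comm] using AddChar.sum_mulShift b (AddChar.IsPrimitive.of_ne_one hχ)

/-- The Walsh transform of a Boolean function `Q` on `K`, the characters of `K` being indexed by
`b ∈ K` through the trace form. -/
def walsh (Q : K → F) (b : K) : ℤ :=
  ∑ x, signChar hF (Q x + Algebra.trace F K (b * x))

lemma walsh_zero (Q : K → F) : walsh hF Q 0 = ∑ x, signChar hF (Q x) := by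
  simp [walsh]

lemma sum_walsh_mul_signChar (Q : K → F) (x : K) :
    ∑ b, walsh hF Q b * signChar hF (Algebra.trace F K (b * x)) =
      Fintype.card K * signChar hF (Q x) := by
  have : CharP F 2 := charP_of_card_eq_prime hF
  have : CharP K 2 := charP_of_injective_algebraMap (algebraMap F K).injective 2
  calc ∑ b, walsh hF Q b * signChar hF (Algebra.trace F K (b * x))
      = ∑ y, signChar hF (Q y) * ∑ b, signChar hF (Algebra.trace F K ((y + x) * b)) := by
        simp only [walsh, Finset.sum_mul, Finset.mul_sum]
        rw [Finset.sum_comm]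
        refine Finset.sum_congr rfl fun y _ => Finset.sum_congr rfl fun b _ => ?_
        rw [mul_comm _ b, mul_add, map_add (Algebra.trace F K), AddChar.map_add_eq_mul,
          AddChar.map_add_eq_mul, mul_assoc]
    _ = Fintype.card K * signChar hF (Q x) := by
        simp only [sum_signChar_trace_mul, CharTwo.add_eq_zero, mul_ite, mul_zero,
          Finset.sum_ite_eq', Finset.mem_univ, if_true]
        exact mul_comm _ _

lemma two_mul_card_zeros (Q : K → F) :
    2 * (Fintype.card {x // Q x = 0} : ℤ) = Fintype.card K + walsh hF Q 0 := by
  simpa [walsh_zero] using two_mul_sum_zeros hF Q 1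

lemma four_mul_hammingNorm_augEncoder (Q : K → F) {b : K} (hb : b ≠ 0) (c : F) :
    4 * (hammingNorm (augEncoder F K (fun x => Q x = 0) (b, c)) : ℤ) =
      Fintype.card K + walsh hF Q 0 - signChar hF c * walsh hF Q b := by
  have hsplit := two_mul_sum_zeros hF Q fun x => signChar hF (Algebra.trace F K (b * x) + c)
  have hlinear : ∑ x, signChar hF (Algebra.trace F K (b * x) + c) = 0 := by
    simp only [AddChar.map_add_eq_mul, ← Finset.sum_mul, sum_signChar_trace_mul, if_neg hb,
      zero_mul]
  have hwalsh : ∑ x, signChar hF (Q x) * signChar hF (Algebra.trace F K (b * x) + c) =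
      signChar hF c * walsh hF Q b := by
    rw [walsh, Finset.mul_sum]
    refine Finset.sum_congr rfl fun x _ => ?_
    rw [AddChar.map_add_eq_mul, AddChar.map_add_eq_mul]
    ring
  have hweight := sum_signChar hF (augEncoder F K (fun x => Q x = 0) (b, c))
  simp only [augEncoder_apply] at hweight
  linarith [two_mul_card_zeros hF Q]

end WalshTransform

section BentFunctions

variable {F K : Type*} [Field F] [Fintype F] (hF : Fintype.card F = 2) [Field K] [Fintype K]
  [Algebra F K]

/-- A Boolean function is bent if its Walsh transform has constant absolute value
`√|K|`, stated with squares to stay in `ℤ`. -/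
def IsBent (Q : K → F) : Prop := ∀ b, walsh hF Q b ^ 2 = Fintype.card K

variable {hF} {Q : K → F} {M : ℕ}

lemma IsBent.exists_signChar_mul_walsh_eq (hQ : IsBent hF Q) (hK : Fintype.card K = (2 * M) ^ 2)
    (b : K) : ∃ c, signChar hF c * walsh hF Q b = 2 * M := by
  have hsq : walsh hF Q b ^ 2 = (2 * M : ℤ) ^ 2 := by rw [hQ, hK]; push_cast; rfl
  rcases sq_eq_sq_iff_eq_or_eq_neg.1 hsq with h | h
  · exact ⟨0, by rw [AddChar.map_zero_eq_one, one_mul, h]⟩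
  · exact ⟨1, by rw [signChar_one, h, neg_one_mul, neg_neg]⟩

lemma card_zeros_of_walsh_zero (hK : Fintype.card K = (2 * M) ^ 2)
    (hQ0 : walsh hF Q 0 = -(2 * M)) :
    Fintype.card {x // Q x = 0} = M * (2 * M - 1) := by
  have hcard := two_mul_card_zeros hF Q
  rw [hQ0, hK] at hcard
  rcases Nat.eq_zero_or_pos M with rfl | hM
  · simpa using hcard
  · zify [show 1 ≤ 2 * M by omega]
    push_cast at hcard
    linarith

lemma hammingNorm_augEncoder_of_signChar_mul_walsh (hM : 0 < M)
    (hK : Fintype.card K = (2 * M) ^ 2) (hQ0 : walsh hF Q 0 = -(2 * M)) {b : K} (hb : b ≠ 0) {c : F}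
    (hc : signChar hF c * walsh hF Q b = 2 * M) :
    hammingNorm (augEncoder F K (fun x => Q x = 0) (b, c)) = M * (M - 1) := by
  have hweight := four_mul_hammingNorm_augEncoder hF Q hb c
  rw [hQ0, hK, hc] at hweight
  zify [show 1 ≤ M from hM]
  push_cast at hweight
  linarith

lemma IsBent.le_hammingNorm_augEncoder (hQ : IsBent hF Q) (hM : 0 < M)
    (hK : Fintype.card K = (2 * M) ^ 2) (hQ0 : walsh hF Q 0 = -(2 * M)) {p : K × F} (hp : p ≠ 0) :
    M * (M - 1) ≤ hammingNorm (augEncoder F K (fun x => Q x = 0) p) := by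
  obtain ⟨b, c⟩ := p
  by_cases hb : b = 0
  · have hc : c ≠ 0 := fun hc => hp (by rw [hb, hc]; rfl)
    have hlength : hammingNorm (augEncoder F K (fun x => Q x = 0) (b, c)) =
        Fintype.card {x // Q x = 0} := by
      simp [hammingNorm, hb, hc]
    rw [hlength, card_zeros_of_walsh_zero hK hQ0]
    exact Nat.mul_le_mul_left M (by omega)
  · have hweight := four_mul_hammingNorm_augEncoder hF Q hb c
    have hsq : (signChar hF c * walsh hF Q b) ^ 2 = (2 * M : ℤ) ^ 2 := by
      rw [mul_pow, hQ, sq, signChar_mul_self, hK]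
      push_cast
      ring
    have hle : signChar hF c * walsh hF Q b ≤ 2 * M :=
      (abs_le_of_sq_le_sq' hsq.le (by positivity)).2
    rw [hQ0, hK] at hweight
    zify [show 1 ≤ M from hM]
    push_cast at hweight
    linarith

lemma IsBent.augEncoder_injective (hQ : IsBent hF Q) (hM : 2 ≤ M)
    (hK : Fintype.card K = (2 * M) ^ 2) (hQ0 : walsh hF Q 0 = -(2 * M)) :
    Function.Injective (augEncoder F K fun x => Q x = 0) := by
  refine (injective_iff_map_eq_zero _).2 fun p hp => ?_
  by_contra hp0
  have hle := hQ.le_hammingNorm_augEncoder (by omega) hK hQ0 hp0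
  rw [hp, hammingNorm_zero] at hle
  have : 0 < M * (M - 1) := Nat.mul_pos (by omega) (by omega)
  omega

lemma IsBent.natCard_augCode (hQ : IsBent hF Q) (hM : 2 ≤ M)
    (hK : Fintype.card K = (2 * M) ^ 2) (hQ0 : walsh hF Q 0 = -(2 * M)) :
    Nat.card (augCode F K fun x => Q x = 0) = 2 ^ (Module.finrank F K + 1) := by
  rw [← coe_range_augEncoder, SetLike.coe_sort_coe, Module.natCard_eq_pow_finrank (K := F),
    LinearMap.finrank_range_of_inj (hQ.augEncoder_injective hM hK hQ0), Module.finrank_prod,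
    Module.finrank_self, Nat.card_eq_fintype_card, hF]

lemma IsBent.natCard_dualCode_augCode (hQ : IsBent hF Q) (hM : 2 ≤ M)
    (hK : Fintype.card K = (2 * M) ^ 2) (hQ0 : walsh hF Q 0 = -(2 * M)) :
    Nat.card (dualCode (augCode F K fun x => Q x = 0)) =
      2 ^ (M * (2 * M - 1) - Module.finrank F K - 1) := by
  rw [← coe_range_augEncoder, natCard_dualCode,
    LinearMap.finrank_range_of_inj (hQ.augEncoder_injective hM hK hQ0), Module.finrank_prod,
    Module.finrank_self, hF, card_zeros_of_walsh_zero hK hQ0, Nat.sub_sub]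

lemma IsBent.isMinDist_augCode (hQ : IsBent hF Q) (hM : 2 ≤ M)
    (hK : Fintype.card K = (2 * M) ^ 2) (hQ0 : walsh hF Q 0 = -(2 * M)) :
    IsMinDist (augCode F K fun x => Q x = 0) (M * (M - 1)) := by
  refine ⟨?_, ?_⟩
  · obtain ⟨c, hc⟩ := hQ.exists_signChar_mul_walsh_eq hK 1
    have hne : ((1, c) : K × F) ≠ 0 := fun h => one_ne_zero (congrArg Prod.fst h)
    exact ⟨_, augEncoder_mem_augCode (1, c),
      (map_ne_zero_iff _ (hQ.augEncoder_injective hM hK hQ0)).2 hne,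
      hammingNorm_augEncoder_of_signChar_mul_walsh (by omega) hK hQ0 one_ne_zero hc⟩
  · rw [← coe_range_augEncoder]
    rintro _ ⟨p, rfl⟩ hp
    exact hQ.le_hammingNorm_augEncoder (by omega) hK hQ0 fun h => hp (by rw [h, map_zero])

/- If every minimum weight codeword vanished at `i`, then `walsh hF Q b` would be
`2 M (-1) ^ Tr(b i)` for all `b ≠ 0`, which contradicts Walsh inversion at `i`. -/
lemma IsBent.exists_mem_augCode_apply_ne_zero (hQ : IsBent hF Q) (hM : 2 ≤ M)
    (hK : Fintype.card K = (2 * M) ^ 2) (hQ0 : walsh hF Q 0 = -(2 * M)) (i : {x // Q x = 0}) :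
    ∃ w ∈ augCode F K fun x => Q x = 0, w i ≠ 0 ∧ hammingNorm w = M * (M - 1) := by
  by_contra! hvanish
  have hwalsh (b : K) (hb : b ≠ 0) :
      walsh hF Q b * signChar hF (Algebra.trace F K (b * i.1)) = 2 * M := by
    obtain ⟨c, hc⟩ := hQ.exists_signChar_mul_walsh_eq hK b
    have hi : Algebra.trace F K (b * i.1) + c = 0 := by
      by_contra hi
      exact hvanish _ (augEncoder_mem_augCode (b, c)) hi
        (hammingNorm_augEncoder_of_signChar_mul_walsh (by omega) hK hQ0 hb hc)
    have : CharP F 2 := charP_of_card_eq_prime hF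
    rw [CharTwo.add_eq_zero.1 hi, mul_comm, hc]
  have hinversion := sum_walsh_mul_signChar hF Q i.1
  rw [Fintype.sum_eq_add_sum_compl 0, Finset.sum_congr rfl fun b hb =>
    hwalsh b (by simpa using hb)] at hinversion
  simp only [zero_mul, map_zero, AddChar.map_zero_eq_one, mul_one, i.2, Finset.sum_const,
    Finset.card_compl, Finset.card_singleton, nsmul_eq_mul, hQ0, hK] at hinversion
  rw [Nat.cast_sub (Nat.one_le_pow _ _ (by omega))] at hinversion
  push_cast at hinversion
  have hfactor : (M : ℤ) * ((2 * M + 1) * (M - 1)) = 0 := by linarith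
  have hsub : (0 : ℤ) < M - 1 := by omega
  have hpos : (0 : ℤ) < M * ((2 * M + 1) * (M - 1)) := by positivity
  exact hpos.ne' hfactor

lemma IsBent.hasLocality_dualCode_augCode (hQ : IsBent hF Q) (hM : 2 ≤ M)
    (hK : Fintype.card K = (2 * M) ^ 2) (hQ0 : walsh hF Q 0 = -(2 * M)) :
    HasLocality (dualCode (augCode F K fun x => Q x = 0)) (M * (M - 1) - 1) := by
  refine hasLocality_of_exists_mem_dualCode fun i => ?_
  obtain ⟨w, hw, hwi, hweight⟩ := hQ.exists_mem_augCode_apply_ne_zero hM hK hQ0 i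
  have : 0 < M * (M - 1) := Nat.mul_pos (by omega) (by omega)
  exact ⟨w, subset_dualCode_dualCode _ hw, hwi, by omega⟩

end BentFunctions

section QuadraticExtension

lemma finrank_eq_of_card_eq_pow {F V : Type*} [Field F] [Fintype F] [AddCommGroup V] [Module F V]
    [Fintype V] {n : ℕ} (h : Fintype.card V = Fintype.card F ^ n) : Module.finrank F V = n :=
  Nat.pow_right_injective Fintype.one_lt_card (Module.card_eq_pow_finrank.symm.trans h)

lemma sum_comp_of_surjective {G H A : Type*} [Group G] [Fintype G] [Group H] [Fintype H]
    [CommSemiring A] (f : G →* H) (hf : Function.Surjective f) (h : H → A) :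
    ∑ x, h (f x) = Nat.card f.ker * ∑ y, h y := by
  rw [← Finset.sum_fiberwise Finset.univ f, Finset.mul_sum]
  refine Finset.sum_congr rfl fun y _ => ?_
  have hfiber : (Finset.univ.filter fun x => f x = y).card = Nat.card f.ker := by
    rw [← Nat.card_congr (MonoidHom.fiberEquivKerOfSurjective hf y), Nat.card_eq_fintype_card,
      ← Set.toFinset_card]
    congr 1
    ext x
    simp
  rw [Finset.sum_congr rfl fun x hx => congrArg h (Finset.mem_filter.1 hx).2, Finset.sum_const,
    hfiber, nsmul_eq_mul]

lemma sum_eq_apply_zero_add_sum_units {K A : Type*} [Field K] [Fintype K] [AddCommMonoid A]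
    (h : K → A) : ∑ x, h x = h 0 + ∑ u : Kˣ, h u := by
  rw [Fintype.sum_eq_add_sum_subtype_ne h 0]
  exact congrArg (h 0 + ·) (Fintype.sum_equiv unitsEquivNeZero _ _ fun _ => rfl).symm

variable {E K : Type*} [Field E] [Fintype E] [Field K] [Algebra E K]
  (hEK : Module.finrank E K = 2)

include hEK

lemma card_eq_sq_of_finrank_eq_two [Fintype K] : Fintype.card K = Fintype.card E ^ 2 := by
  rw [Module.card_eq_pow_finrank (K := E), hEK]

section Finite

variable [Finite K]

lemma pow_card_pow_card (x : K) : (x ^ Fintype.card E) ^ Fintype.card E = x := by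
  have := Fintype.ofFinite K
  rw [← pow_mul, ← sq, ← card_eq_sq_of_finrank_eq_two hEK, FiniteField.pow_card]

lemma algebraMap_norm_eq_pow_card_add_one (x : K) :
    algebraMap E K (Algebra.norm E x) = x ^ (Fintype.card E + 1) := by
  rw [FiniteField.algebraMap_norm_eq_prod_pow, hEK, Nat.card_eq_fintype_card,
    Finset.prod_range_succ, Finset.prod_range_one, pow_zero, pow_one, pow_one, pow_succ']

lemma algebraMap_trace_eq_add_pow_card (x : K) :
    algebraMap E K (Algebra.trace E K x) = x + x ^ Fintype.card E := by
  rw [FiniteField.algebraMap_trace_eq_sum_pow, hEK, Nat.card_eq_fintype_card,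
    Finset.sum_range_succ, Finset.sum_range_one, pow_zero, pow_one, pow_one]

lemma norm_add_eq_add_trace_pow_card_mul (x y : K) :
    Algebra.norm E (x + y) = Algebra.norm E x + Algebra.norm E y +
      Algebra.trace E K (y ^ Fintype.card E * x) := by
  apply (algebraMap E K).injective
  have hfrob : (x + y) ^ Fintype.card E = x ^ Fintype.card E + y ^ Fintype.card E :=
    map_add (FiniteField.frobeniusAlgHom E K) x y
  simp only [map_add, algebraMap_norm_eq_pow_card_add_one hEK,
    algebraMap_trace_eq_add_pow_card hEK, mul_pow, pow_card_pow_card hEK, pow_succ, hfrob]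
  ring

end Finite

lemma sum_comp_norm [Fintype K] {A : Type*} [CommSemiring A] (h : E → A) :
    ∑ x : K, h (Algebra.norm E x) = h 0 + (Fintype.card E + 1) * ∑ u : Eˣ, h u := by
  let f : Kˣ →* Eˣ := Units.map (Algebra.norm E)
  have hf : Function.Surjective f := FiniteField.unitsMap_norm_surjective E K
  have hker : Nat.card f.ker = Fintype.card E + 1 := by
    have hmul := f.ker.card_mul_index
    rw [Subgroup.index_ker, MonoidHom.range_eq_top.2 hf, Subgroup.card_top, Nat.card_units,
      Nat.card_units, Nat.card_eq_fintype_card (α := K), card_eq_sq_of_finrank_eq_two hEK,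
      Nat.card_eq_fintype_card (α := E), ← one_pow 2, Nat.sq_sub_sq, one_pow] at hmul
    exact Nat.eq_of_mul_eq_mul_right (Nat.sub_pos_of_lt Fintype.one_lt_card) hmul
  have hunits := sum_comp_of_surjective f hf fun u => h u
  rw [hker] at hunits
  rw [sum_eq_apply_zero_add_sum_units, Algebra.norm_zero]
  exact_mod_cast congrArg (h 0 + ·) hunits

end QuadraticExtension

section TraceNorm

variable (F E : Type*) {K : Type*} [Field F] [Field E] [Field K] [Algebra F E] [Algebra E K]

/-- The quadratic form `x ↦ Tr_{E/F}(N_{K/E}(x))`, whose zero set is the defining set `D`; for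
`|E| = q^r` and `|K| = q^{2r}` one has `N_{K/E}(x) = x^{q^r+1}`. -/
def traceNorm (x : K) : F :=
  Algebra.trace F E (Algebra.norm E x)

variable {F E} (hEK : Module.finrank E K = 2)

include hEK

lemma traceNorm_add [Fintype E] [Finite K] [Algebra F K] [IsScalarTower F E K] (x y : K) :
    traceNorm F E (x + y) = traceNorm F E x + traceNorm F E y +
      Algebra.trace F K (y ^ Fintype.card E * x) := by
  simp only [traceNorm, norm_add_eq_add_trace_pow_card_mul hEK, map_add, Algebra.trace_trace]

/- On a line `E e` through the origin of `K`, the form `traceNorm` is `e t ↦ Tr(N(e) t²)`, which is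
additive in characteristic `2`. -/
lemma exists_addSubgroup_traceNorm_eq_zero [Fintype F] [Fintype E] [CharP E 2] {k : ℕ}
    (hk : k * Fintype.card F ≤ Fintype.card E) {x : K} (hx : traceNorm F E x = 0) :
    ∃ V : AddSubgroup K, x ∈ V ∧ k ≤ Nat.card V ∧ ∀ y ∈ V, traceNorm F E y = 0 := by
  obtain ⟨e, he, s, rfl⟩ : ∃ e : K, e ≠ 0 ∧ ∃ s : E, s • e = x := by
    by_cases h : x = 0
    · exact ⟨1, one_ne_zero, 0, by rw [h, zero_smul]⟩
    · exact ⟨x, h, 1, one_smul E x⟩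
  have hline (t : E) : traceNorm F E (t • e) = Algebra.trace F E (t ^ 2 * Algebra.norm E e) := by
    rw [traceNorm, Algebra.smul_def, map_mul, Algebra.norm_algebraMap, hEK]
  let L : E →+ F := AddMonoidHom.mk' (fun t => traceNorm F E (t • e)) fun t t' => by
    rw [hline, hline, hline, CharTwo.add_sq, add_mul, map_add]
  let ℓ : E →+ K := (LinearMap.toSpanSingleton E K e).toAddMonoidHom
  have hℓ : Function.Injective ℓ := smul_left_injective E he
  refine ⟨L.ker.map ℓ, ⟨s, hx, rfl⟩, ?_, ?_⟩
  · rw [AddSubgroup.card_map_of_injective hℓ]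
    refine Nat.le_of_mul_le_mul_right ?_ (Fintype.card_pos (α := F))
    calc k * Fintype.card F ≤ Nat.card L.ker * Nat.card L.range := by
          rwa [← AddSubgroup.index_ker, AddSubgroup.card_mul_index, Nat.card_eq_fintype_card]
      _ ≤ Nat.card L.ker * Fintype.card F := by
          rw [← Nat.card_eq_fintype_card (α := F)]
          exact Nat.mul_le_mul_left _ (AddSubgroup.card_le_card_addGroup _)
  · rintro _ ⟨t, ht, rfl⟩
    exact ht

variable [Fintype F] [Fintype K] (hF : Fintype.card F = 2) [Algebra F K]

lemma walsh_zero_traceNorm [Fintype E] : walsh hF (traceNorm F E : K → F) 0 = -Fintype.card E := by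
  have hsum := sum_signChar_trace_mul hF (1 : E)
  simp only [one_mul, if_neg one_ne_zero] at hsum
  rw [sum_eq_apply_zero_add_sum_units, map_zero, AddChar.map_zero_eq_one] at hsum
  rw [walsh_zero]
  unfold traceNorm
  rw [sum_comp_norm hEK fun t => signChar hF (Algebra.trace F E t), map_zero,
    AddChar.map_zero_eq_one]
  linear_combination (Fintype.card E + 1 : ℤ) * hsum

lemma walsh_traceNorm_pow_card [Fintype E] [IsScalarTower F E K] (a : K) :
    walsh hF (traceNorm F E) (a ^ Fintype.card E) =
      signChar hF (traceNorm F E a) * walsh hF (traceNorm F E : K → F) 0 := by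
  have : CharP F 2 := charP_of_card_eq_prime hF
  rw [walsh_zero, Finset.mul_sum, ← Equiv.sum_comp (Equiv.addRight a)]
  refine Finset.sum_congr rfl fun x _ => ?_
  rw [← AddChar.map_add_eq_mul, Equiv.coe_addRight, traceNorm_add hEK x a, add_right_comm,
    add_comm (traceNorm F E a), add_assoc, CharTwo.add_self_eq_zero, add_zero]

lemma isBent_traceNorm [Finite E] [IsScalarTower F E K] :
    IsBent hF (traceNorm F E : K → F) := by
  intro b
  have := Fintype.ofFinite E
  rw [← pow_card_pow_card hEK b, walsh_traceNorm_pow_card hEK hF, walsh_zero_traceNorm hEK hF,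
    mul_pow, sq (signChar hF _), signChar_mul_self, one_mul, neg_sq,
    card_eq_sq_of_finrank_eq_two hEK, Nat.cast_pow]

end TraceNorm

theorem stmt8 (r m n : ℕ) (hr : 3 ≤ r) (hm : m = 2 * r)
    (hn : n = 2 ^ (r - 1) * (2 ^ r - 1))
    (Fq Fr Fm : Type) [Field Fq] [Field Fr] [Field Fm]
    [Fintype Fq] [Fintype Fr] [Fintype Fm]
    [Algebra Fq Fr] [Algebra Fr Fm] [Algebra Fq Fm] [IsScalarTower Fq Fr Fm]
    (hcq : Fintype.card Fq = 2) (hcr : Fintype.card Fr = 2 ^ r)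
    (hcm : Fintype.card Fm = 2 ^ m)
    (g : Fm → Fr) (hg : ∀ x : Fm, algebraMap Fr Fm (g x) = x ^ (2 ^ r + 1))
    (C : Set ({x : Fm // Algebra.trace Fq Fr (g x) = 0} → Fq))
    (hC : C = augCode Fq Fm (fun x => Algebra.trace Fq Fr (g x) = 0)) :
    -- `C` is an `[n, m+1, 2^{r-1}(2^{r-1}-1)]` binary code with locality 3
    Fintype.card {x : Fm // Algebra.trace Fq Fr (g x) = 0} = n ∧
    Nat.card C = 2 ^ (m + 1) ∧
    IsMinDist C (2 ^ (r - 1) * (2 ^ (r - 1) - 1)) ∧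
    HasLocality C 3 ∧
    -- the dual is an `[n, n-m-1, 4]` binary code with locality `2^{r-1}(2^{r-1}-1) - 1`
    Nat.card (dualCode C) = 2 ^ (n - m - 1) ∧
    IsMinDist (dualCode C) 4 ∧
    HasLocality (dualCode C) (2 ^ (r - 1) * (2 ^ (r - 1) - 1) - 1) := by
  obtain ⟨s, rfl⟩ : ∃ s, r = s + 1 := ⟨r - 1, by omega⟩
  subst hm hn hC
  have hpow : 2 ^ (s + 1) = 2 * 2 ^ s := pow_succ' 2 s
  have hM : 2 ^ 2 ≤ 2 ^ s := Nat.pow_le_pow_right two_pos (by omega)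
  have hEK : Module.finrank Fr Fm = 2 :=
    finrank_eq_of_card_eq_pow (by rw [hcm, hcr, ← pow_mul, mul_comm])
  have hFK : Module.finrank Fq Fm = 2 * (s + 1) := finrank_eq_of_card_eq_pow (by rw [hcm, hcq])
  obtain rfl : g = Algebra.norm Fr := funext fun x => (algebraMap Fr Fm).injective <| by
    rw [hg, algebraMap_norm_eq_pow_card_add_one hEK, hcr]
  have hK : Fintype.card Fm = (2 * 2 ^ s) ^ 2 := by
    rw [card_eq_sq_of_finrank_eq_two hEK, hcr, hpow]
  have hQ : IsBent hcq (traceNorm Fq Fr : Fm → Fq) := isBent_traceNorm hEK hcq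
  have hQ0 : walsh hcq (traceNorm Fq Fr : Fm → Fq) 0 = -(2 * (2 ^ s : ℕ)) := by
    rw [walsh_zero_traceNorm hEK hcq, hcr, hpow, Nat.cast_mul, Nat.cast_ofNat]
  have : CharP Fr 2 := charP_of_card_eq_prime_pow hcr
  have : CharP Fq 2 := charP_of_card_eq_prime hcq
  have hV (x : Fm) (hx : traceNorm Fq Fr x = 0) :=
    exists_addSubgroup_traceNorm_eq_zero hEK (k := 4) (by omega) hx
  obtain ⟨V, -, hV4, hVQ⟩ := hV 0 (by simp [traceNorm])
  rw [hpow, Nat.add_sub_cancel, ← hFK]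
  exact ⟨card_zeros_of_walsh_zero hK hQ0, hQ.natCard_augCode (by omega) hK hQ0,
    hQ.isMinDist_augCode (by omega) hK hQ0, hasLocality_augCode hV,
    hQ.natCard_dualCode_augCode (by omega) hK hQ0, isMinDist_dualCode_augCode hcq hV4 hVQ,
    hQ.hasLocality_dualCode_augCode (by omega) hK hQ0⟩
end
end

section
/- Let q > 2 be a prime power and m = 2r with r ≥ 2, and set n = q^{r−1}(q^r − q + 1). Then the code \overline{C_D}' generated by the rows of [I_{m+1} | G_1] has length n + m + 1, dimension m + 1, and minimum distance d' satisfying d' ≥ q^{r−1}(q^r − q^{r−1} − q + 1) + 1. Moreover, its dual (\overline{C_D}')^⊥ has length n + m + 1, dimension n, and minimum distance d'^⊥ satisfying 2 ≤ d'^⊥ ≤ 3. -/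
open scoped Classical

noncomputable section

/-- The code generated by the rows of the block matrix `[I_k | G]`: the codeword
attached to a coefficient vector `v : Fin k → F` is `v` on the first `k`
coordinates and `v * G` on the remaining coordinates. -/
def genCode {ι F : Type*} [Fintype ι] [CommRing F] (k : ℕ) (G : Fin k → ι → F) :
    Set ((Fin k ⊕ ι) → F) :=
  {w | ∃ v : Fin k → F, w = Sum.elim v fun d => ∑ j, v j * G j d}

/-!
Let `K` and `F` denote `F_{q^r}` and `F_q`. The map `x ↦ Tr_{K/F} (N x)`, with `N` the norm to
`K`, is a quadratic form `f` over `F`: it takes every nonzero value equally often, and zero less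
often. If `a` is fixed and `ℓ x = polar f x a`, then completing the square turns each member
`f + u (ℓ - t) = 0` of the pencil through the section `{f = 0, ℓ = t}` into a translate of a level
set `{f = u t + u² f a}`. So the members together have at most as many points as all level sets
of `f`, that is `q^m`; since the members meet exactly in that section, double counting bounds every
affine hyperplane section of `D` by `q^(2r-2)`. Hence a nonzero codeword vanishes at at most
`q^(2r-2)` of the points of `D`. On the dual side, no coordinate vanishes identically on the code,
and the column of `G₁` at `d = 0` has weight two, which gives a dual codeword of weight three.
-/

section Counting

open Finset Module

@[to_additive card_fiber_mul_card_of_addMonoidHom]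
theorem card_fiber_mul_card_of_monoidHom {G H : Type*} [Group G] [Group H] [Fintype G] [Fintype H]
    [DecidableEq H] (φ : G →* H) (hφ : Function.Surjective φ) (y : H) :
    #{x | φ x = y} * Fintype.card H = Fintype.card G := by
  have hfiber (z : H) : #{x | φ x = z} = #{x | φ x = y} :=
    MonoidHom.card_fiber_eq_of_mem_range φ (hφ z) (hφ y)
  calc #{x | φ x = y} * Fintype.card H = ∑ z : H, #{x | φ x = z} := by
        simp only [hfiber, sum_const, card_univ, smul_eq_mul, mul_comm]
    _ = Fintype.card G := (card_eq_sum_card_fiberwise fun x _ => mem_coe.2 (mem_univ (φ x))).symm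

theorem card_filter_comp_eq_sum {X Y Z : Type*} [Fintype X] [Fintype Y] (f : X → Y) (g : Y → Z)
    (z : Z) : #{x | g (f x) = z} = ∑ y with g y = z, #{x | f x = y} := by
  have hsum := sum_card_fiberwise_eq_card_filter univ {y | g y = z} f
  simp only [mem_filter, mem_univ, true_and] at hsum
  exact hsum.symm

section Pencil

variable {F V : Type*} [Field F] [AddCommGroup V] [Module F V] [Fintype V] (Q : QuadraticForm F V)

-- Translation by `u • a` absorbs the linear term.
theorem card_quadraticForm_add_mul_polar (a : V) (t u : F) :
    #{x | Q x + u * (QuadraticMap.polar Q x a - t) = 0} = #{x | Q x = u * t + u * u * Q a} := by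
  have hshift (x : V) : Q (x + u • a) = Q x + u * QuadraticMap.polar Q x a + u * u * Q a := by
    rw [QuadraticMap.map_add Q, Q.map_smul, Q.polar_smul_right, smul_eq_mul, smul_eq_mul]
    ring
  refine card_equiv (Equiv.addRight (u • a)) fun x => ?_
  simp only [mem_filter, mem_univ, true_and, Equiv.coe_addRight, hshift]
  constructor <;> intro hx <;> linear_combination hx

variable [Fintype F]

theorem card_filter_add_mul_eq_zero (a b : F) :
    #{u : F | a + u * b = 0} + (if b = 0 then 1 else 0) =
      1 + Fintype.card F * if b = 0 ∧ a = 0 then 1 else 0 := by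
  rcases eq_or_ne b 0 with rfl | hb
  · by_cases ha : a = 0 <;> simp [ha, add_comm]
  · have hroot : ({u : F | a + u * b = 0} : Finset F) = {-a / b} := by
      ext u
      simp only [mem_filter, mem_univ, true_and, mem_singleton, eq_div_iff hb,
        eq_neg_iff_add_eq_zero, add_comm]
    simp [hroot, hb]

theorem sum_card_pencil {X : Type*} [Fintype X] (f h : X → F) :
    ∑ u : F, #{x | f x + u * h x = 0} + #{x | h x = 0} =
      Fintype.card X + Fintype.card F * #{x | h x = 0 ∧ f x = 0} := by
  have hswap : ∑ u : F, #{x | f x + u * h x = 0} = ∑ x : X, #{u : F | f x + u * h x = 0} := by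
    simp only [card_filter]
    exact sum_comm
  rw [hswap, card_filter, ← sum_add_distrib,
    sum_congr rfl fun x _ => card_filter_add_mul_eq_zero (f x) (h x), sum_add_distrib, ← mul_sum,
    ← card_filter, sum_const, card_univ, smul_eq_mul, mul_one]

theorem card_hyperplane_section_mul_sq_le
    (hQ : ∀ z w : F, w ≠ 0 → #{x | Q x = z} ≤ #{x | Q x = w}) {a : V}
    (ha : Q.polarBilin.flip a ≠ 0) (t : F) :
    #{x | QuadraticMap.polar Q x a = t ∧ Q x = 0} * Fintype.card F ^ 2 ≤ Fintype.card V := by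
  have hpencil := sum_card_pencil Q fun x => QuadraticMap.polar Q x a - t
  simp only [card_quadraticForm_add_mul_polar, sub_eq_zero] at hpencil
  have hmembers : ∑ u : F, #{x | Q x = u * t + u * u * Q a} ≤ Fintype.card V := by
    calc ∑ u : F, #{x | Q x = u * t + u * u * Q a} ≤ ∑ u : F, #{x | Q x = u} := by
          refine sum_le_sum fun u _ => ?_
          rcases eq_or_ne u 0 with rfl | hu
          · simp
          · exact hQ _ _ hu
      _ = Fintype.card V :=
          (card_eq_sum_card_fiberwise fun x _ => mem_coe.2 (mem_univ (Q x))).symm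
  have hhyperplane : #{x | QuadraticMap.polar Q x a = t} * Fintype.card F = Fintype.card V :=
    card_fiber_mul_card_of_addMonoidHom (Q.polarBilin.flip a).toAddMonoidHom
      (LinearMap.surjective ha) t
  nlinarith

end Pencil

section NormForm

variable (K L : Type*) [Field K] [Field L] [Algebra K L]

theorem card_norm_eq_mul_card_sub_one [Fintype K] [Fintype L] {k : K} (hk : k ≠ 0) :
    #{x : L | Algebra.norm K x = k} * (Fintype.card K - 1) = Fintype.card L - 1 := by
  have hunits : #{x : L | Algebra.norm K x = k} =
      #{u : Lˣ | Units.map (Algebra.norm K) u = Units.mk0 k hk} := by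
    refine (card_bij (fun (u : Lˣ) _ => (u : L)) ?_ ?_ ?_).symm
    · intro u hu
      simpa [Units.ext_iff] using hu
    · exact fun _ _ _ _ h => Units.ext h
    · intro x hx
      have hx : Algebra.norm K x = k := by simpa using hx
      have hx0 : x ≠ 0 := by
        rintro rfl
        exact hk (by rw [← hx, Algebra.norm_zero])
      exact ⟨Units.mk0 x hx0, by simpa [Units.ext_iff] using hx, rfl⟩
  rw [hunits, ← Fintype.card_units, ← Fintype.card_units]
  exact card_fiber_mul_card_of_monoidHom _ (FiniteField.unitsMap_norm_surjective K L) _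

variable {K L}

theorem norm_add_of_finrank_eq_two [Fintype K] [Finite L] (h : finrank K L = 2) (x y : L) :
    Algebra.norm K (x + y) = Algebra.norm K x + Algebra.norm K y +
      Algebra.trace K L (x * FiniteField.frobeniusAlgHom K L y) := by
  have hnorm (z : L) : algebraMap K L (Algebra.norm K z) =
      z * FiniteField.frobeniusAlgHom K L z := by
    simp [FiniteField.algebraMap_norm_eq_prod_pow, h, prod_range_succ]
  have htrace (z : L) : algebraMap K L (Algebra.trace K L z) =
      z + FiniteField.frobeniusAlgHom K L z := by
    simp [FiniteField.algebraMap_trace_eq_sum_pow, h, sum_range_succ]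
  have hsq : FiniteField.frobeniusAlgHom K L (FiniteField.frobeniusAlgHom K L y) = y := by
    have := Fintype.ofFinite L
    simp only [FiniteField.coe_frobeniusAlgHom, ← pow_mul, ← sq]
    rw [← h, ← card_eq_pow_finrank, FiniteField.pow_card]
  apply (algebraMap K L).injective
  simp only [map_add, map_mul, hnorm, htrace, hsq]
  ring

/-- The norm of a quadratic extension `L/K` of finite fields as a quadratic form over `K`, so that
the theory of polar forms applies to it. -/
def normForm [Fintype K] [Finite L] (h : finrank K L = 2) : QuadraticForm K L where
  toFun := Algebra.norm K
  toFun_smul a x := by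
    rw [Algebra.smul_def, map_mul, Algebra.norm_algebraMap, h, sq, smul_eq_mul]
  exists_companion' :=
    ⟨(Algebra.traceForm K L).compl₂ (FiniteField.frobeniusAlgHom K L).toLinearMap,
      norm_add_of_finrank_eq_two h⟩

theorem polar_normForm [Fintype K] [Finite L] (h : finrank K L = 2) (x y : L) :
    QuadraticMap.polar (normForm h) x y =
      Algebra.trace K L (x * FiniteField.frobeniusAlgHom K L y) := by
  rw [QuadraticMap.polar, sub_sub]
  exact sub_eq_of_eq_add' (norm_add_of_finrank_eq_two h x y)

end NormForm

section TraceNorm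

variable {F K L : Type*} [Field F] [Field K] [Field L] [Fintype F] [Fintype K] [Fintype L]
  [Algebra F K] [Algebra K L] {φ : K →ₗ[F] F} {T : ℕ}

theorem card_fiber_linearMap (hφ : φ ≠ 0) (hT : Fintype.card K = Fintype.card F * T) (z : F) :
    #{k | φ k = z} = T := by
  have h := card_fiber_mul_card_of_addMonoidHom φ.toAddMonoidHom (LinearMap.surjective hφ) z
  rw [hT, mul_comm] at h
  exact Nat.eq_of_mul_eq_mul_left Fintype.card_pos h

theorem card_norm_eq_of_finrank_eq_two (h : finrank K L = 2) {k : K} (hk : k ≠ 0) :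
    #{x : L | Algebra.norm K x = k} = Fintype.card K + 1 := by
  have hcard := card_norm_eq_mul_card_sub_one K L hk
  rw [card_eq_pow_finrank (K := K) (V := L), h, ← one_pow 2, Nat.sq_sub_sq, one_pow] at hcard
  exact Nat.eq_of_mul_eq_mul_right (Nat.sub_pos_of_lt Fintype.one_lt_card) hcard

theorem card_comp_norm_eq_of_ne_zero (h : finrank K L = 2) (hφ : φ ≠ 0)
    (hT : Fintype.card K = Fintype.card F * T) {z : F} (hz : z ≠ 0) :
    #{x : L | φ (Algebra.norm K x) = z} = T * (Fintype.card K + 1) := by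
  have hfiber : ∀ k ∈ ({k : K | φ k = z} : Finset K),
      #{x : L | Algebra.norm K x = k} = Fintype.card K + 1 := by
    intro k hk
    refine card_norm_eq_of_finrank_eq_two h ?_
    rintro rfl
    simp [hz.symm] at hk
  rw [card_filter_comp_eq_sum (Algebra.norm K) φ, sum_congr rfl hfiber, sum_const,
    card_fiber_linearMap hφ hT, smul_eq_mul]

theorem card_comp_norm_eq_zero (h : finrank K L = 2) (hφ : φ ≠ 0)
    (hT : Fintype.card K = Fintype.card F * T) :
    #{x : L | φ (Algebra.norm K x) = 0} = T * (Fintype.card K - Fintype.card F + 1) := by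
  have hfiber : ∀ k ∈ ({k : K | φ k = 0} : Finset K).erase 0,
      #{x : L | Algebra.norm K x = k} = Fintype.card K + 1 :=
    fun k hk => card_norm_eq_of_finrank_eq_two h (ne_of_mem_erase hk)
  have hzero : #{x : L | Algebra.norm K x = 0} = 1 := by
    simp only [Algebra.norm_eq_zero_iff]
    exact card_eq_one.2 ⟨0, by ext; simp⟩
  rw [card_filter_comp_eq_sum (Algebra.norm K) φ, ← add_sum_erase _ _ (show (0 : K) ∈ _ by simp),
    hzero, sum_congr rfl hfiber, sum_const, card_erase_of_mem (by simp),
    card_fiber_linearMap hφ hT, smul_eq_mul, hT]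
  obtain ⟨T, rfl⟩ : ∃ T', T = T' + 1 :=
    Nat.exists_eq_succ_of_ne_zero (by rintro rfl; simp at hT)
  rw [Nat.add_sub_cancel, mul_add_one (Fintype.card F), Nat.add_sub_cancel]
  ring

omit [Fintype F] [Fintype K] in
theorem card_comp_norm_eq_le [Finite F] [Finite K] (h : finrank K L = 2) (hφ : φ ≠ 0) (z : F)
    {w : F} (hw : w ≠ 0) :
    #{x : L | φ (Algebra.norm K x) = z} ≤ #{x : L | φ (Algebra.norm K x) = w} := by
  have := Fintype.ofFinite F
  have := Fintype.ofFinite K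
  have hT : Fintype.card K = Fintype.card F * #{k | φ k = 0} := by
    rw [mul_comm]
    exact (card_fiber_mul_card_of_addMonoidHom φ.toAddMonoidHom (LinearMap.surjective hφ) 0).symm
  rw [card_comp_norm_eq_of_ne_zero h hφ hT hw]
  rcases eq_or_ne z 0 with rfl | hz
  · rw [card_comp_norm_eq_zero h hφ hT]
    gcongr
    exact Nat.sub_le _ _
  · rw [card_comp_norm_eq_of_ne_zero h hφ hT hz]

variable [Algebra F L] [IsScalarTower F K L]

theorem card_trace_mul_eq_and_comp_norm_eq_zero_le (h : finrank K L = 2) (hφ : φ ≠ 0)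
    (hT : Fintype.card K = Fintype.card F * T) {b : L} (hb : b ≠ 0) (t : F) :
    #{x : L | φ (Algebra.trace K L (x * b)) = t ∧ φ (Algebra.norm K x) = 0} ≤ T ^ 2 := by
  obtain ⟨a, rfl⟩ : ∃ a, FiniteField.frobeniusAlgHom K L a = b :=
    Finite.surjective_of_injective (FiniteField.frobeniusAlgHom K L).injective b
  let Q : QuadraticForm F L := φ.compQuadraticMap' (normForm h)
  have hpolar (x : L) : QuadraticMap.polar Q x a =
      φ (Algebra.trace K L (x * FiniteField.frobeniusAlgHom K L a)) := by
    rw [LinearMap.compQuadraticMap_polar, polar_normForm]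
  have hnondeg : Q.polarBilin.flip a ≠ 0 := by
    obtain ⟨k, hk⟩ := DFunLike.ne_iff.1 hφ
    obtain ⟨y, rfl⟩ := Algebra.trace_surjective K L k
    refine DFunLike.ne_iff.2 ⟨y / FiniteField.frobeniusAlgHom K L a, ?_⟩
    rwa [LinearMap.flip_apply, QuadraticMap.polarBilin_apply_apply, hpolar, div_mul_cancel₀ _ hb]
  have hsection := card_hyperplane_section_mul_sq_le Q (fun z _ => card_comp_norm_eq_le h hφ z)
    hnondeg t
  rw [card_eq_pow_finrank (K := K) (V := L), h, hT, mul_pow, mul_comm] at hsection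
  simp only [hpolar] at hsection
  exact Nat.le_of_mul_le_mul_left hsection (pow_pos Fintype.card_pos 2)

end TraceNorm

end Counting

section Codes

variable {ι F : Type*} [Fintype ι]

theorem hammingNorm_sumElim {κ : Type*} [Fintype κ] [Zero F] (u : κ → F) (v : ι → F) :
    hammingNorm (Sum.elim u v) = hammingNorm u + hammingNorm v := by
  simp only [hammingNorm, Finset.card_filter, Fintype.sum_sum_type, Sum.elim_inl, Sum.elim_inr]
  congr!

theorem hammingNorm_add_card_eq_zero [Zero F] (v : ι → F) :
    hammingNorm v + (Finset.univ.filter fun i => v i = 0).card = Fintype.card ι := by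
  rw [hammingNorm, add_comm, Finset.card_filter_add_card_filter_not, Finset.card_univ]

theorem hammingNorm_single_le_one [DecidableEq ι] [Zero F] (i : ι) (x : F) :
    hammingNorm (Pi.single i x : ι → F) ≤ 1 := by
  refine (Finset.card_le_card (t := {i}) fun j hj => ?_).trans (Finset.card_singleton i).le
  by_contra hji
  rw [Finset.mem_singleton] at hji
  simp [hji] at hj

theorem hammingNorm_cons_le {m : ℕ} [Zero F] (x : F) (v : Fin m → F) :
    hammingNorm (Fin.cons x v : Fin (m + 1) → F) ≤ hammingNorm v + 1 := by
  simp only [hammingNorm, Finset.card_filter, Fin.sum_univ_succ, Fin.cons_zero, Fin.cons_succ]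
  rw [add_comm]
  gcongr
  split_ifs <;> simp

variable [CommRing F] {k : ℕ} (G : Fin k → ι → F)

theorem exists_isMinDist_of_mem {C : Set (ι → F)} {c : ι → F} (hc : c ∈ C) (hc0 : c ≠ 0) :
    ∃ d, IsMinDist C d ∧ d ≤ hammingNorm c := by
  have hex : ∃ d, ∃ c ∈ C, c ≠ 0 ∧ hammingNorm c = d := ⟨_, c, hc, hc0, rfl⟩
  have hmin : ∀ c ∈ C, c ≠ 0 → Nat.find hex ≤ hammingNorm c :=
    fun c hc hc0 => Nat.find_min' hex ⟨c, hc, hc0, rfl⟩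
  exact ⟨Nat.find hex, ⟨Nat.find_spec hex, hmin⟩, hmin c hc hc0⟩

theorem genCode_eq_range :
    genCode k G = Set.range fun v : Fin k → F => Sum.elim v fun d => ∑ j, v j * G j d :=
  Set.ext fun _ => exists_congr fun _ => eq_comm

theorem card_genCode : Nat.card (genCode k G) = Nat.card F ^ k := by
  rw [genCode_eq_range, Nat.card_range_of_injective, Nat.card_fun, Nat.card_fin]
  exact fun v w h => (Sum.elim_eq_iff.1 h).1

theorem le_hammingNorm_of_mem_genCode {N : ℕ}
    (hN : ∀ v : Fin k → F, v ≠ 0 →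
      (Finset.univ.filter fun d => ∑ j, v j * G j d = 0).card ≤ N)
    {c : Fin k ⊕ ι → F} (hc : c ∈ genCode k G) (hc0 : c ≠ 0) :
    Fintype.card ι - N + 1 ≤ hammingNorm c := by
  obtain ⟨v, rfl⟩ := hc
  have hv : v ≠ 0 := by
    rintro rfl
    refine hc0 (funext fun i => ?_)
    cases i <;> simp
  have hpos : 0 < hammingNorm v := hammingNorm_pos_iff.2 hv
  have hzeros := hammingNorm_add_card_eq_zero fun d => ∑ j, v j * G j d
  have := hN v hv
  rw [hammingNorm_sumElim]
  omega

theorem dualCode_genCode_eq_range :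
    dualCode (genCode k G) =
      Set.range fun u : ι → F => Sum.elim (fun j => -∑ d, u d * G j d) u := by
  ext w
  constructor
  · intro hw
    refine ⟨w ∘ Sum.inr, funext fun i => ?_⟩
    rcases i with j | d
    · have hrow := hw _ ⟨Pi.single j 1, rfl⟩
      simp only [Fintype.sum_sum_type, Sum.elim_inl, Sum.elim_inr, Pi.single_apply, mul_ite,
        ite_mul, mul_one, one_mul, mul_zero, zero_mul, Finset.sum_ite_eq', Finset.mem_univ,
        if_true] at hrow
      exact (eq_neg_of_add_eq_zero_left hrow).symm
    · rfl
  · rintro ⟨u, rfl⟩ _ ⟨v, rfl⟩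
    simp only [Fintype.sum_sum_type, Sum.elim_inl, Sum.elim_inr, Finset.mul_sum, neg_mul,
      Finset.sum_neg_distrib, Finset.sum_mul]
    rw [Finset.sum_comm, neg_add_eq_zero]
    exact Finset.sum_congr rfl fun d _ => Finset.sum_congr rfl fun j _ => by ring

theorem card_dualCode_genCode :
    Nat.card (dualCode (genCode k G)) = Nat.card F ^ Fintype.card ι := by
  rw [dualCode_genCode_eq_range, Nat.card_range_of_injective, Nat.card_fun,
    Nat.card_eq_fintype_card (α := ι)]
  exact fun u w h => (Sum.elim_eq_iff.1 h).2

theorem exists_mem_dualCode_genCode_hammingNorm_le [Nontrivial F] (d : ι) :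
    ∃ w ∈ dualCode (genCode k G), w ≠ 0 ∧ hammingNorm w ≤ hammingNorm (fun j => G j d) + 1 := by
  rw [dualCode_genCode_eq_range]
  refine ⟨_, ⟨Pi.single d 1, rfl⟩, fun h => ?_, ?_⟩
  · simpa using congrFun h (Sum.inr d)
  · rw [hammingNorm_sumElim]
    refine add_le_add ?_ (hammingNorm_single_le_one d 1)
    exact Finset.card_le_card (Finset.monotone_filter_right _ fun j => by simp [Pi.single_apply])

theorem two_le_hammingNorm_of_mem_dualCode [NoZeroDivisors F] {C : Set (ι → F)}
    (hC : ∀ i, ∃ c ∈ C, c i ≠ 0) {w : ι → F} (hw : w ∈ dualCode C) (hw0 : w ≠ 0) :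
    2 ≤ hammingNorm w := by
  by_contra! hlt
  have hpos := hammingNorm_pos_iff.2 hw0
  obtain ⟨i, hi⟩ := Finset.card_eq_one.1 (show hammingNorm w = 1 by omega)
  have hsupp (j : ι) : w j ≠ 0 ↔ j = i := by
    simpa using Finset.ext_iff.1 hi j
  obtain ⟨c, hc, hci⟩ := hC i
  have hdot := hw c hc
  rw [Fintype.sum_eq_single i fun j hj => by
    rw [not_ne_iff.1 (mt (hsupp j).1 hj), zero_mul]] at hdot
  exact mul_ne_zero ((hsupp i).2 rfl) hci hdot

theorem exists_mem_genCode_ne_zero [Nontrivial F] (hG : ∀ d, ∃ j, G j d ≠ 0) (i : Fin k ⊕ ι) :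
    ∃ c ∈ genCode k G, c i ≠ 0 := by
  rcases i with j | d
  · exact ⟨_, ⟨Pi.single j 1, rfl⟩, by simp⟩
  · obtain ⟨j, hj⟩ := hG d
    exact ⟨_, ⟨Pi.single j 1, rfl⟩, by simpa [Pi.single_apply] using hj⟩

theorem exists_isMinDist_dualCode_genCode [IsDomain F] (hG : ∀ d, ∃ j, G j d ≠ 0) (d : ι) :
    ∃ δ, IsMinDist (dualCode (genCode k G)) δ ∧ 2 ≤ δ ∧ δ ≤ hammingNorm (fun j => G j d) + 1 := by
  obtain ⟨w, hw, hw0, hle⟩ := exists_mem_dualCode_genCode_hammingNorm_le G d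
  obtain ⟨δ, hδ, hδw⟩ := exists_isMinDist_of_mem hw hw0
  obtain ⟨c, hc, hc0, rfl⟩ := hδ.1
  exact ⟨_, hδ, two_le_hammingNorm_of_mem_dualCode (exists_mem_genCode_ne_zero G hG) hc hc0,
    hδw.trans hle⟩

end Codes

section TraceCode

open Finset Module

variable {F K L : Type*} [Field F] [Field K] [Field L] [Algebra F K] [Algebra K L] [Algebra F L]

/-- The matrix with columns `(1, Tr(β₀ d) + c₀, …, Tr(βₘ₋₁ d) + cₘ₋₁)` indexed by the elements
`d : L` satisfying `p`, which together with an identity block generates the augmented trace code.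
The defining set is a predicate, so that a column index is an element of a subtype of `L`. -/
def augmentedTraceMatrix {m : ℕ} (β : Fin m → L) (c : Fin m → F) {p : L → Prop} :
    Fin (m + 1) → {x : L // p x} → F :=
  Fin.cons 1 fun i d => Algebra.trace F L (β i * d) + c i

theorem sum_mul_augmentedTraceMatrix {m : ℕ} (β : Fin m → L) (c : Fin m → F) {p : L → Prop}
    (v : Fin (m + 1) → F) (d : {x : L // p x}) :
    ∑ j, v j * augmentedTraceMatrix β c j d =
      Algebra.trace F L ((∑ i, v i.succ • β i) * d) + (v 0 + ∑ i, v i.succ * c i) := by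
  simp only [augmentedTraceMatrix, Fin.sum_univ_succ, Fin.cons_zero, Fin.cons_succ, Pi.one_apply,
    mul_one, mul_add, sum_add_distrib, sum_mul, smul_mul_assoc, map_sum, map_smul, smul_eq_mul]
  ring

theorem hammingNorm_augmentedTraceMatrix_zero_le {m : ℕ} (β : Fin m → L) (c : Fin m → F)
    {p : L → Prop} (h0 : p 0) :
    hammingNorm (fun j => augmentedTraceMatrix β c j ⟨0, h0⟩) ≤ hammingNorm c + 1 := by
  have hcol : (fun j => augmentedTraceMatrix β c j ⟨0, h0⟩) = Fin.cons 1 c := by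
    funext j
    cases j using Fin.cases <;> simp [augmentedTraceMatrix]
  exact hcol ▸ hammingNorm_cons_le 1 c

theorem exists_isMinDist_dualCode_genCode_augmentedTraceMatrix [Fintype L] {m : ℕ} (β : Fin m → L)
    (c : Fin m → F) {p : L → Prop} (h0 : p 0) :
    ∃ d, IsMinDist (dualCode (genCode (m + 1) (augmentedTraceMatrix β c (p := p)))) d ∧
      2 ≤ d ∧ d ≤ hammingNorm c + 2 := by
  obtain ⟨d, hd, h2, hle⟩ := exists_isMinDist_dualCode_genCode
    (augmentedTraceMatrix β c (p := p)) (fun _ => ⟨0, one_ne_zero⟩) ⟨0, h0⟩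
  exact ⟨d, hd, h2,
    hle.trans (Nat.add_le_add_right (hammingNorm_augmentedTraceMatrix_zero_le β c h0) 1)⟩

section Zeros

variable [Fintype F] [Fintype K] [Fintype L] [IsScalarTower F K L] {T : ℕ}

theorem card_trace_mul_add_eq_zero_le (h : finrank K L = 2)
    (hT : Fintype.card K = Fintype.card F * T) {b : L} {s : F} (hbs : b ≠ 0 ∨ s ≠ 0) :
    #{d : {x : L // Algebra.trace F K (Algebra.norm K x) = 0} |
      Algebra.trace F L (b * d) + s = 0} ≤ T ^ 2 := by
  rcases eq_or_ne b 0 with rfl | hb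
  · simp [hbs.neg_resolve_left rfl]
  · refine le_trans (card_le_card_of_injOn Subtype.val ?_ Subtype.val_injective.injOn)
      (card_trace_mul_eq_and_comp_norm_eq_zero_le h (Algebra.trace_ne_zero F K) hT hb (-s))
    intro d hd
    simp only [coe_filter, mem_univ, true_and, Set.mem_ofPred_eq] at hd ⊢
    rw [Algebra.trace_trace, mul_comm]
    exact ⟨eq_neg_of_add_eq_zero_left hd, d.2⟩

theorem card_sum_mul_augmentedTraceMatrix_eq_zero_le (h : finrank K L = 2)
    (hT : Fintype.card K = Fintype.card F * T) {m : ℕ} {β : Fin m → L}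
    (hβ : LinearIndependent F β) (c : Fin m → F) {v : Fin (m + 1) → F} (hv : v ≠ 0) :
    #{d : {x : L // Algebra.trace F K (Algebra.norm K x) = 0} |
      ∑ j, v j * augmentedTraceMatrix β c j d = 0} ≤ T ^ 2 := by
  simp only [sum_mul_augmentedTraceMatrix]
  refine card_trace_mul_add_eq_zero_le h hT ?_
  by_contra! hbs
  have hsucc : ∀ i : Fin m, v i.succ = 0 :=
    Fintype.linearIndependent_iff.1 hβ (fun i => v i.succ) hbs.1
  have hzero : v 0 = 0 := by simpa [hsucc] using hbs.2
  exact hv (funext fun j => Fin.cases hzero hsucc j)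

end Zeros

theorem eq_norm_of_algebraMap_eq_pow [Fintype K] [Finite L] (h : finrank K L = 2) {g : L → K}
    (hg : ∀ x, algebraMap K L (g x) = x ^ (Fintype.card K + 1)) : g = Algebra.norm K := by
  funext x
  apply (algebraMap K L).injective
  rw [hg, FiniteField.algebraMap_norm_eq_prod_pow, h]
  simp [prod_range_succ, pow_succ']

theorem finrank_eq_of_card_eq_pow_s9 [Fintype K] [Fintype L] {k : ℕ}
    (h : Fintype.card L = Fintype.card K ^ k) : finrank K L = k :=
  Nat.pow_right_injective Fintype.one_lt_card (card_eq_pow_finrank.symm.trans h)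

theorem linearIndependent_pow_of_forall_exists_pow_eq [FiniteDimensional K L] {m : ℕ}
    (hm : finrank K L = m) {α : L} (hα : ∀ y : L, y ≠ 0 → ∃ k : ℕ, α ^ k = y) :
    LinearIndependent K fun i : Fin m => α ^ (i : ℕ) := by
  have htop : IntermediateField.adjoin K {α} = ⊤ := by
    refine eq_top_iff.2 fun y _ => ?_
    rcases eq_or_ne y 0 with rfl | hy
    · exact zero_mem _
    · obtain ⟨k, rfl⟩ := hα y hy
      exact pow_mem (IntermediateField.mem_adjoin_simple_self K α) k
  rw [← hm, ← (Field.primitive_element_iff_minpoly_natDegree_eq K α).1 htop]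
  exact linearIndependent_pow α

theorem mul_sub_sub_add_one_add_sq {q T : ℕ} (hq : 2 ≤ q) (hT : 2 ≤ T) :
    T * (q * T - T - q + 1) + T ^ 2 = T * (q * T - q + 1) := by
  have hle : T + q ≤ q * T := by nlinarith
  obtain ⟨k, hk⟩ := Nat.exists_eq_add_of_le hle
  rw [show q * T - T - q = k by omega, show q * T - q = T + k by omega]
  ring

theorem stmt9_general [Fintype F] [Fintype K] [Fintype L] [IsScalarTower F K L] {q r m n w : ℕ}
    (hr : 2 ≤ r) (hn : n = q ^ (r - 1) * (q ^ r - q + 1)) (hF : Fintype.card F = q)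
    (hK : Fintype.card K = q ^ r) (hL : Fintype.card L = q ^ (2 * r)) {g : L → K}
    (hg : ∀ x, algebraMap K L (g x) = x ^ (q ^ r + 1)) {β : Fin m → L}
    (hβ : LinearIndependent F β) {c : Fin m → F} (hc : hammingNorm c ≤ w)
    {G : Fin (m + 1) → {x : L // Algebra.trace F K (g x) = 0} → F}
    (hG : G = augmentedTraceMatrix β c) :
    Fintype.card (Fin (m + 1) ⊕ {x : L // Algebra.trace F K (g x) = 0}) = n + m + 1 ∧
      Nat.card (genCode (m + 1) G) = q ^ (m + 1) ∧
      (∀ u ∈ genCode (m + 1) G, u ≠ 0 →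
        q ^ (r - 1) * (q ^ r - q ^ (r - 1) - q + 1) + 1 ≤ hammingNorm u) ∧
      Nat.card (dualCode (genCode (m + 1) G)) = q ^ n ∧
      ∃ d, IsMinDist (dualCode (genCode (m + 1) G)) d ∧ 2 ≤ d ∧ d ≤ w + 2 := by
  have h : finrank K L = 2 := finrank_eq_of_card_eq_pow_s9 (by rw [hL, hK, pow_mul'])
  obtain rfl : g = Algebra.norm K := eq_norm_of_algebraMap_eq_pow h (hK ▸ hg)
  subst hF hG
  have hpow : Fintype.card F ^ r = Fintype.card F * Fintype.card F ^ (r - 1) :=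
    (mul_pow_sub_one (by omega) _).symm
  have hq : 2 ≤ Fintype.card F := Fintype.one_lt_card
  have hT : 2 ≤ Fintype.card F ^ (r - 1) := hq.trans (Nat.le_self_pow (by omega) _)
  have hD : Fintype.card {x : L // Algebra.trace F K (Algebra.norm K x) = 0} = n := by
    rw [Fintype.card_subtype, hn, ← hK]
    exact card_comp_norm_eq_zero h (Algebra.trace_ne_zero F K) (hK.trans hpow)
  refine ⟨?_, ?_, fun u hu hu0 => ?_, ?_, ?_⟩
  · rw [Fintype.card_sum, Fintype.card_fin, hD]
    omega
  · rw [card_genCode, Nat.card_eq_fintype_card]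
  · have hdist := le_hammingNorm_of_mem_genCode _ (fun v hv =>
      card_sum_mul_augmentedTraceMatrix_eq_zero_le h (hK.trans hpow) hβ c hv) hu hu0
    rwa [hD, hn, hpow, ← mul_sub_sub_add_one_add_sq hq hT, Nat.add_sub_cancel, ← hpow] at hdist
  · rw [card_dualCode_genCode, hD, Nat.card_eq_fintype_card]
  · have h0 : Algebra.trace F K (Algebra.norm K (0 : L)) = 0 := by
      rw [Algebra.norm_zero, map_zero]
    obtain ⟨d, hd, h2, hle⟩ := exists_isMinDist_dualCode_genCode_augmentedTraceMatrix β c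
      (p := fun x => Algebra.trace F K (Algebra.norm K x) = 0) h0
    exact ⟨d, hd, h2, hle.trans (Nat.add_le_add_right hc 2)⟩

end TraceCode

theorem stmt9 (p a q r m n : ℕ) (hp : p.Prime) (ha : 0 < a) (hqpa : q = p ^ a)
    (hq2 : 2 < q) (hr : 2 ≤ r) (hm : m = 2 * r)
    (hn : n = q ^ (r - 1) * (q ^ r - q + 1))
    (Fq Fr Fm : Type) [Field Fq] [Field Fr] [Field Fm]
    [Fintype Fq] [Fintype Fr] [Fintype Fm]
    [Algebra Fq Fr] [Algebra Fr Fm] [Algebra Fq Fm] [IsScalarTower Fq Fr Fm]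
    (hcq : Fintype.card Fq = q) (hcr : Fintype.card Fr = q ^ r)
    (hcm : Fintype.card Fm = q ^ m)
    (g : Fm → Fr) (hg : ∀ x : Fm, algebraMap Fr Fm (g x) = x ^ (q ^ r + 1))
    -- `α` is a primitive element of `F_{q^m}`
    (α : Fm) (hα : ∀ y : Fm, y ≠ 0 → ∃ k : ℕ, α ^ k = y)
    -- the matrix `G₁`
    (G1 : Fin (m + 1) → {x : Fm // Algebra.trace Fq Fr (g x) = 0} → Fq)
    (hG1 : ∀ k d, G1 k d =
      if (k : ℕ) = 0 then 1
      else Algebra.trace Fq Fm (α ^ ((k : ℕ) - 1) * d.1)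
        + (if (k : ℕ) = 2 then 1 else 0))
    (C' : Set ((Fin (m + 1) ⊕ {x : Fm // Algebra.trace Fq Fr (g x) = 0}) → Fq))
    (hC' : C' = genCode (m + 1) G1) :
    -- length `n + m + 1`
    Fintype.card (Fin (m + 1) ⊕ {x : Fm // Algebra.trace Fq Fr (g x) = 0})
      = n + m + 1 ∧
    -- dimension `m + 1`
    Nat.card C' = q ^ (m + 1) ∧
    -- minimum distance at least `q^{r-1}(q^r - q^{r-1} - q + 1) + 1`
    (∀ c ∈ C', c ≠ 0 →
      q ^ (r - 1) * (q ^ r - q ^ (r - 1) - q + 1) + 1 ≤ hammingNorm c) ∧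
    -- the dual has dimension `n` and minimum distance between `2` and `3`
    Nat.card (dualCode C') = q ^ n ∧
    (∃ d : ℕ, IsMinDist (dualCode C') d ∧ 2 ≤ d ∧ d ≤ 3) := by
  subst hm hC'
  exact stmt9_general hr hn hcq hcr hcm hg
    (linearIndependent_pow_of_forall_exists_pow_eq (finrank_eq_of_card_eq_pow_s9 (hcq ▸ hcm)) hα)
    (hammingNorm_single_le_one ⟨1, by omega⟩ 1)
    (funext₂ fun k d => by
      cases k using Fin.cases <;>
        simp [hG1, augmentedTraceMatrix, Pi.single_apply, Fin.ext_iff])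
end
end

section
/- Let q = p^e with p an odd prime and e a positive integer, let m ≥ 3 be odd, and set l = e(p−1)(m+3)/4 (an integer). Let s ∈ F_q^*, b ∈ F_{q^m}^*, and let N_s be the number of x ∈ F_{q^m} satisfying both Tr_{q^m/q}(bx) = s and Tr_{q^m/q}(x²) = 0. Then N_s = q^{m−2} if Tr_{q^m/q}(b²) = 0, and N_s = q^{m−2} − (−1)^l η(Tr_{q^m/q}(b²)) q^{(m−3)/2} if Tr_{q^m/q}(b²) ≠ 0. -/
open scoped Classical

noncomputable section

/-- The quadratic character of a finite field: `1` on nonzero squares, `-1` on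
nonsquares, `0` at `0`. -/
def qchar (F : Type*) [MonoidWithZero F] : F → ℤ :=
  fun y => if y = 0 then 0 else if IsSquare y then 1 else -1

/-!
Let `ψ` be a primitive additive character of `K = F_q` with quadratic Gauss sum `G`, and let `B` be
a nondegenerate symmetric bilinear form of odd dimension `n` over `K`, with determinant `Δ`.
Detecting the equations `B b x = s` and `B x x = 0` by `ψ` expresses `q ^ 2` times the number of
solutions as a sum over `(u, t)` of Gaussian sums, those of `u * B x x + t * (B b x - s)`. For
`u = 0` only `t = 0` contributes, and it gives `q ^ n`. For `u ≠ 0`, completing the square in `x`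
and diagonalizing `B` gives `η (u * Δ) * G ^ n` times a phase, because `n` is odd; completing the
square in `t` then absorbs the factor `η u` and leaves
`η (-Δ * B b b) * G ^ (n + 1) * ψ (u * s ^ 2 / B b b)`. It remains to sum over `u ≠ 0` and to use
`G ^ 2 = η (-1) * q`.

For the trace form of `L / K`, `Δ` is the discriminant of a basis. It is a square in `L`, namely
that of the determinant of the matrix of conjugates of the basis. An element of `K` that is a square
in an extension of odd degree is already a square in `K`, so `η Δ = 1`.
-/

open LinearMap (BilinForm)
open Module (Basis finrank)

section QuadraticCharacter

variable {K : Type*} [Field K] [Fintype K]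

lemma qchar_eq_quadraticChar (a : K) : qchar K a = quadraticChar K a := by
  simp only [qchar, quadraticChar_apply, quadraticCharFun]
  congr

lemma ringChar_ne_two_of_card_eq_odd_pow {p e : ℕ} (hp : Odd p)
    (hcard : Fintype.card K = p ^ e) : ringChar K ≠ 2 := fun h => by
  have heven := FiniteField.even_card_of_char_two h
  rw [hcard, ← Nat.even_iff] at heven
  exact Nat.not_even_iff_odd.2 hp.pow heven

lemma quadraticChar_neg_one_of_card_eq_pow {p e : ℕ} (hp : Odd p)
    (hcard : Fintype.card K = p ^ e) :
    quadraticChar K (-1) = (-1) ^ (e * (p / 2)) := by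
  rw [quadraticChar_neg_one (ringChar_ne_two_of_card_eq_odd_pow hp hcard), hcard, Nat.cast_pow,
    map_pow, ZMod.χ₄_eq_neg_one_pow (Nat.odd_iff.1 hp), ← pow_mul, mul_comm]

lemma quadraticChar_neg_one_pow_eq_neg_one_pow {p e n : ℕ} (hp : Odd p)
    (hcard : Fintype.card K = p ^ e) (hn : Odd n) :
    quadraticChar K (-1) ^ ((n + 3) / 2) = (-1) ^ (e * (p - 1) * (n + 3) / 4) := by
  rw [quadraticChar_neg_one_of_card_eq_pow hp hcard, ← pow_mul]
  obtain ⟨j, rfl⟩ := hp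
  obtain ⟨k, rfl⟩ := hn
  have hexp : e * (2 * j + 1 - 1) * (2 * k + 1 + 3) = 4 * (e * j * (k + 2)) := by
    rw [Nat.add_sub_cancel]
    ring
  rw [hexp, Nat.mul_div_cancel_left _ four_pos]
  congr 3 <;> omega

lemma quadraticChar_mul_self_mul {d : K} (hd : d ≠ 0) (a : K) :
    quadraticChar K (d * d * a) = quadraticChar K a := by
  rw [map_mul, ← sq, quadraticChar_sq_one' hd, one_mul]

variable (K) (R : Type*) [CommRing R]

/-- The quadratic character of `K` with values in an arbitrary commutative ring `R`, so that it
can be multiplied with an additive character `K → R`. -/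
def quadraticCharIn : MulChar K R :=
  (quadraticChar K).ringHomComp (Int.castRingHom R)

variable {K R}

lemma quadraticCharIn_apply (a : K) :
    quadraticCharIn K R a = ((quadraticChar K a : ℤ) : R) := rfl

lemma quadraticCharIn_mul_self {a : K} (ha : a ≠ 0) :
    quadraticCharIn K R a * quadraticCharIn K R a = 1 := by
  rw [quadraticCharIn_apply, ← Int.cast_mul, ← sq, quadraticChar_sq_one ha, Int.cast_one]

lemma quadraticCharIn_ne_one [Nontrivial R] (hK : ringChar K ≠ 2) (hR : ringChar R ≠ 2) :
    quadraticCharIn K R ≠ 1 := by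
  obtain ⟨a, ha⟩ := quadraticChar_exists_neg_one' hK
  intro h
  have hone : quadraticCharIn K R a = 1 := by rw [h, MulChar.one_apply_coe]
  rw [quadraticCharIn_apply, ha, Int.cast_neg, Int.cast_one] at hone
  exact Ring.neg_one_ne_one_of_char_ne_two hR hone

lemma quadraticCharIn_add_one (hK : ringChar K ≠ 2) (y : K) :
    quadraticCharIn K R y + 1 = ((Finset.univ.filter fun x : K => x ^ 2 = y).card : R) := by
  have h := quadraticChar_card_sqrts hK y
  rw [Set.toFinset_ofPred] at h
  rw [quadraticCharIn_apply]
  exact_mod_cast congrArg (Int.cast : ℤ → R) h.symm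

variable [IsDomain R] {ψ : AddChar K R}

lemma gaussSum_quadraticCharIn_sq (hK : ringChar K ≠ 2) (hR : ringChar R ≠ 2)
    (hψ : ψ.IsPrimitive) :
    gaussSum (quadraticCharIn K R) ψ ^ 2 = quadraticCharIn K R (-1) * Fintype.card K :=
  gaussSum_sq (quadraticCharIn_ne_one hK hR) ((quadraticChar_isQuadratic K).comp _) hψ

lemma sum_addChar_mul_sq (hK : ringChar K ≠ 2) (hψ : ψ.IsPrimitive) {a : K} (ha : a ≠ 0) :
    ∑ x, ψ (a * x ^ 2) = quadraticCharIn K R a * gaussSum (quadraticCharIn K R) ψ := by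
  have hlinear : ∑ y, ψ (a * y) = 0 := by
    simpa [ha, mul_comm] using AddChar.sum_mulShift a hψ
  have hshift := gaussSum_mulShift (quadraticCharIn K R) ψ (Units.mk0 a ha)
  calc ∑ x, ψ (a * x ^ 2)
      = ∑ y, ∑ x with x ^ 2 = y, ψ (a * x ^ 2) := (Finset.sum_fiberwise _ _ _).symm
    _ = ∑ y, (quadraticCharIn K R y + 1) * ψ (a * y) := by
        refine Finset.sum_congr rfl fun y _ => ?_
        rw [quadraticCharIn_add_one hK, ← nsmul_eq_mul, ← Finset.sum_const]
        exact Finset.sum_congr rfl fun x hx => by rw [(Finset.mem_filter.1 hx).2]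
    _ = gaussSum (quadraticCharIn K R) (ψ.mulShift a) := by
        simp only [add_mul, one_mul, Finset.sum_add_distrib, hlinear, add_zero, gaussSum,
          AddChar.mulShift_apply]
    _ = quadraticCharIn K R a * gaussSum (quadraticCharIn K R) ψ := by
        rw [← hshift, Units.val_mk0, ← mul_assoc, quadraticCharIn_mul_self ha, one_mul]

end QuadraticCharacter

section BilinearForm

variable {A M ι : Type*} [CommRing A] [AddCommGroup M] [Module A M] [Fintype ι]

lemma det_toMatrix_eq_prod [DecidableEq ι] {B : BilinForm A M} {w : Basis ι A M}
    (hw : B.IsOrthoᵢ w) :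
    (LinearMap.BilinForm.toMatrix w B).det = ∏ i, B (w i) (w i) := by
  have hdiag : LinearMap.BilinForm.toMatrix w B = Matrix.diagonal fun i => B (w i) (w i) := by
    ext i j
    rw [LinearMap.BilinForm.toMatrix_apply]
    rcases eq_or_ne i j with rfl | hij
    · rw [Matrix.diagonal_apply_eq]
    · rw [Matrix.diagonal_apply_ne _ hij, hw hij]
  rw [hdiag, Matrix.det_diagonal]

lemma bilin_self_equivFun_symm {B : BilinForm A M} {w : Basis ι A M} (hw : B.IsOrthoᵢ w)
    (c : ι → A) : B (w.equivFun.symm c) (w.equivFun.symm c) = ∑ i, B (w i) (w i) * c i ^ 2 := by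
  simp only [Basis.equivFun_symm_apply, map_sum, LinearMap.sum_apply, map_smul,
    LinearMap.smul_apply, smul_eq_mul]
  refine Finset.sum_congr rfl fun i _ => ?_
  rw [Finset.sum_eq_single i (fun j _ hji => by rw [hw hji, mul_zero]) (by simp)]
  ring

lemma nondegenerate_smul [NoZeroDivisors A] {B : BilinForm A M} (hB : B.Nondegenerate)
    {u : A} (hu : u ≠ 0) : (u • B).Nondegenerate :=
  ⟨fun x hx => hB.1 x fun y => (mul_eq_zero.1 (hx y)).resolve_left hu,
    fun y hy => hB.2 y fun x => (mul_eq_zero.1 (hy x)).resolve_left hu⟩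

variable {K V : Type*} [Field K] [AddCommGroup V] [Module K V]

lemma quadraticChar_det_toMatrix_eq [Fintype K] [DecidableEq ι] (v w : Basis ι K V)
    (B : BilinForm K V) :
    quadraticChar K (LinearMap.BilinForm.toMatrix w B).det =
      quadraticChar K (LinearMap.BilinForm.toMatrix v B).det := by
  have hP : (v.toMatrix w).det ≠ 0 := by
    rw [← Basis.det_apply]
    exact (v.isUnit_det w).ne_zero
  rw [← LinearMap.BilinForm.toMatrix_mul_basis_toMatrix v w B, Matrix.det_mul, Matrix.det_mul,
    Matrix.det_transpose, mul_right_comm, quadraticChar_mul_self_mul hP]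

lemma exists_isOrtho_basis {κ : Type*} [Finite κ] (hK : ringChar K ≠ 2) (v : Basis κ K V)
    {B : BilinForm K V} (hB : B.IsSymm) : ∃ w : Basis κ K V, B.IsOrthoᵢ w := by
  have : FiniteDimensional K V := v.finiteDimensional_of_finite
  have : Invertible (2 : K) := invertibleOfNonzero (Ring.two_ne_zero hK)
  obtain ⟨w, hw⟩ := LinearMap.BilinForm.exists_orthogonal_basis
    (LinearMap.BilinForm.isSymm_iff.1 hB)
  refine ⟨w.reindex (w.indexEquiv v), fun i j hij => ?_⟩
  simpa only [Basis.coe_reindex, Function.onFun, Function.comp_apply] using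
    hw ((w.indexEquiv v).symm.injective.ne hij)

end BilinearForm

section CharacterSums

variable {K V ι R : Type*} [Field K] [AddCommGroup V] [Module K V] [Fintype V] [Fintype ι]
  [CommRing R]

lemma addChar_sum_eq_prod {A M : Type*} [AddCommMonoid A] [CommMonoid M] (ψ : AddChar A M)
    (c : ι → A) : ψ (∑ i, c i) = ∏ i, ψ (c i) :=
  map_prod ψ.toMonoidHom (fun i => Multiplicative.ofAdd (c i)) Finset.univ

lemma sum_addChar_bilin_self_add_linear (ψ : AddChar K R) (hK : ringChar K ≠ 2)
    {B : BilinForm K V} (hB : B.IsSymm) (b : V) :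
    ∑ x, ψ (B x x + B b x) = ψ (-(B b b / 4)) * ∑ x, ψ (B x x) := by
  have htwo : (2 : K) ≠ 0 := Ring.two_ne_zero hK
  rw [Finset.mul_sum]
  refine Fintype.sum_equiv (Equiv.addRight ((2 : K)⁻¹ • b)) _ _ fun x => ?_
  rw [← AddChar.map_add_eq_mul]
  congr 1
  have hfour : (4 : K) = 2 * 2 := by norm_num
  simp only [Equiv.coe_addRight, map_add, LinearMap.add_apply, map_smul, LinearMap.smul_apply,
    smul_eq_mul, hB.eq x b, hfour]
  field_simp
  ring

variable [IsDomain R]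

lemma natCard_common_zeros_mul_card_sq {A X : Type*} [CommRing A] [Fintype A] [Fintype X]
    {ψ : AddChar A R} (hψ : ψ.IsPrimitive) (f g : X → A) :
    (Nat.card {x // f x = 0 ∧ g x = 0} : R) * (Fintype.card A : R) ^ 2 =
      ∑ u, ∑ v, ∑ x, ψ (u * f x + v * g x) := by
  have hindicator : ∀ x, (∑ u, ψ (u * f x)) * (∑ v, ψ (v * g x)) =
      if f x = 0 ∧ g x = 0 then (Fintype.card A : R) ^ 2 else 0 := fun x => by
    rw [AddChar.sum_mulShift _ hψ, AddChar.sum_mulShift _ hψ, ite_and]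
    split_ifs <;> simp [sq]
  calc (Nat.card {x // f x = 0 ∧ g x = 0} : R) * (Fintype.card A : R) ^ 2
      = ∑ x, (∑ u, ψ (u * f x)) * (∑ v, ψ (v * g x)) := by
        simp only [hindicator]
        rw [← Finset.sum_filter, Finset.sum_const, nsmul_eq_mul, Nat.card_eq_fintype_card,
          Fintype.card_subtype]
    _ = ∑ x, ∑ u, ∑ v, ψ (u * f x + v * g x) := by
        simp only [Finset.sum_mul_sum, AddChar.map_add_eq_mul]
    _ = ∑ u, ∑ v, ∑ x, ψ (u * f x + v * g x) := by
        rw [Finset.sum_comm]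
        exact Finset.sum_congr rfl fun u _ => Finset.sum_comm

lemma sum_erase_zero_addChar_mul_eq_neg_one {A : Type*} [CommRing A] [Fintype A]
    {ψ : AddChar A R} (hψ : ψ.IsPrimitive) {a : A} (ha : a ≠ 0) :
    ∑ u ∈ Finset.univ.erase 0, ψ (u * a) = -1 := by
  have hsum : ∑ u, ψ (u * a) = 0 := by simpa [ha] using AddChar.sum_mulShift a hψ
  rw [← Finset.add_sum_erase _ _ (Finset.mem_univ 0), zero_mul, AddChar.map_zero_eq_one] at hsum
  exact eq_neg_of_add_eq_zero_right hsum

variable {ψ : AddChar K R}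

lemma sum_addChar_linear_eq_zero (hψ : ψ ≠ 1) {φ : V →ₗ[K] K} (hφ : φ ≠ 0) :
    ∑ x, ψ (φ x) = 0 := by
  have hne : ψ.compAddMonoidHom φ.toAddMonoidHom ≠ 1 := by
    obtain ⟨t, ht⟩ := AddChar.ne_one_iff.1 hψ
    obtain ⟨x, rfl⟩ := LinearMap.surjective hφ t
    exact AddChar.ne_one_iff.2 ⟨x, ht⟩
  exact AddChar.sum_eq_zero_of_ne_one hne

variable [Fintype K]

lemma sum_addChar_quadratic (hK : ringChar K ≠ 2) (hψ : ψ.IsPrimitive) {a : K} (ha : a ≠ 0)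
    (r : K) :
    ∑ x, ψ (a * x ^ 2 + r * x) =
      quadraticCharIn K R a * gaussSum (quadraticCharIn K R) ψ * ψ (-(r ^ 2 / (4 * a))) := by
  have hsymm : LinearMap.BilinForm.IsSymm (a • LinearMap.mul K K) :=
    ⟨fun x y => by simp [mul_comm x y]⟩
  have h := sum_addChar_bilin_self_add_linear ψ hK hsymm (r / a)
  simp only [LinearMap.smul_apply, LinearMap.mul_apply', smul_eq_mul, ← sq,
    sum_addChar_mul_sq hK hψ ha] at h
  rw [show r ^ 2 / (4 * a) = a * (r / a) ^ 2 / 4 by field_simp, mul_comm, ← h]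
  refine Finset.sum_congr rfl fun x _ => ?_
  rw [← mul_assoc, mul_div_cancel₀ r ha]

lemma sum_addChar_bilin_self [DecidableEq ι] (hK : ringChar K ≠ 2) (hψ : ψ.IsPrimitive)
    (v : Basis ι K V) {B : BilinForm K V} (hB : B.IsSymm) (hB' : B.Nondegenerate) :
    ∑ x, ψ (B x x) = quadraticCharIn K R (LinearMap.BilinForm.toMatrix v B).det *
      gaussSum (quadraticCharIn K R) ψ ^ Fintype.card ι := by
  obtain ⟨w, hw⟩ := exists_isOrtho_basis hK v hB
  have hdet := det_toMatrix_eq_prod hw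
  have hne : ∀ i, B (w i) (w i) ≠ 0 := fun i => by
    have := (LinearMap.BilinForm.nondegenerate_iff_det_ne_zero w).1 hB'
    rw [hdet] at this
    exact Finset.prod_ne_zero_iff.1 this i (Finset.mem_univ i)
  calc ∑ x, ψ (B x x)
      = ∑ c : ι → K, ∏ i, ψ (B (w i) (w i) * c i ^ 2) := by
        rw [← w.equivFun.symm.toEquiv.sum_comp]
        refine Finset.sum_congr rfl fun c _ => ?_
        rw [← addChar_sum_eq_prod, ← bilin_self_equivFun_symm hw, LinearEquiv.coe_toEquiv]
    _ = ∏ i, ∑ t, ψ (B (w i) (w i) * t ^ 2) := by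
        rw [Finset.prod_univ_sum, Fintype.piFinset_univ]
    _ = ∏ i, (quadraticCharIn K R (B (w i) (w i)) * gaussSum (quadraticCharIn K R) ψ) :=
        Finset.prod_congr rfl fun i _ => sum_addChar_mul_sq hK hψ (hne i)
    _ = quadraticCharIn K R (LinearMap.BilinForm.toMatrix w B).det *
          gaussSum (quadraticCharIn K R) ψ ^ Fintype.card ι := by
        rw [Finset.prod_mul_distrib, ← map_prod, ← hdet, Finset.prod_const, Finset.card_univ]
    _ = _ := by
        rw [quadraticCharIn_apply, quadraticChar_det_toMatrix_eq v w, ← quadraticCharIn_apply]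

lemma sum_sum_addChar_mul_linear_sub (hψ : ψ.IsPrimitive) {φ : V →ₗ[K] K} (hφ : φ ≠ 0) (s : K) :
    ∑ v, ∑ x, ψ (v * (φ x - s)) = (Fintype.card V : R) := by
  rw [Fintype.sum_eq_single (0 : K)]
  · simp
  · intro v hv
    have hψ' : ψ ≠ 1 := by simpa using hψ one_ne_zero
    have hsum : ∑ x, ψ ((v • φ) x) = 0 := sum_addChar_linear_eq_zero hψ' (smul_ne_zero hv hφ)
    calc ∑ x, ψ (v * (φ x - s)) = ∑ x, ψ ((v • φ) x) * ψ (-(v * s)) := by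
          refine Finset.sum_congr rfl fun x _ => ?_
          rw [← AddChar.map_add_eq_mul, LinearMap.smul_apply, smul_eq_mul, mul_sub, sub_eq_add_neg]
      _ = 0 := by rw [← Finset.sum_mul, hsum, zero_mul]

lemma sum_addChar_smul_bilin_self_add_linear [DecidableEq ι] (hK : ringChar K ≠ 2)
    (hψ : ψ.IsPrimitive) (v : Basis ι K V) (hodd : Odd (Fintype.card ι)) {B : BilinForm K V}
    (hB : B.IsSymm) (hB' : B.Nondegenerate) {u : K} (hu : u ≠ 0) (b : V) (t : K) :
    ∑ x, ψ (u * B x x + t * B b x) =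
      quadraticCharIn K R (u * (LinearMap.BilinForm.toMatrix v B).det) *
        gaussSum (quadraticCharIn K R) ψ ^ Fintype.card ι * ψ (-(t ^ 2 * B b b / (4 * u))) := by
  have hpow : quadraticCharIn K R u ^ Fintype.card ι = quadraticCharIn K R u := by
    obtain ⟨k, hk⟩ := hodd
    rw [hk, pow_succ, pow_mul, sq, quadraticCharIn_mul_self hu, one_pow, one_mul]
  have hsymm : (u • B).IsSymm := hB.smul u
  have h := sum_addChar_bilin_self_add_linear ψ hK hsymm ((t / u) • b)
  rw [sum_addChar_bilin_self hK hψ v hsymm (nondegenerate_smul hB' hu),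
    map_smul (LinearMap.BilinForm.toMatrix v), Matrix.det_smul, map_mul, map_pow, hpow,
    ← map_mul] at h
  simp only [LinearMap.smul_apply, map_smul, smul_eq_mul] at h
  rw [mul_comm _ (ψ _),
    show t ^ 2 * B b b / (4 * u) = t / u * (t / u * (u * B b b)) / 4 by field_simp, ← h]
  refine Finset.sum_congr rfl fun x _ => ?_
  rw [← mul_assoc (t / u) u, div_mul_cancel₀ t hu]

-- If `B b b = 0` both sides vanish, the right one because `quadraticCharIn K R 0 = 0`.
lemma sum_sum_addChar_smul_bilin_self_add_linear_sub [DecidableEq ι] (hK : ringChar K ≠ 2)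
    (hψ : ψ.IsPrimitive) (v : Basis ι K V) (hodd : Odd (Fintype.card ι)) {B : BilinForm K V}
    (hB : B.IsSymm) (hB' : B.Nondegenerate) {u : K} (hu : u ≠ 0) (b : V) {s : K} (hs : s ≠ 0) :
    ∑ t, ∑ x, ψ (u * B x x + t * (B b x - s)) =
      quadraticCharIn K R (-((LinearMap.BilinForm.toMatrix v B).det * B b b)) *
        gaussSum (quadraticCharIn K R) ψ ^ (Fintype.card ι + 1) * ψ (u * (s ^ 2 / B b b)) := by
  set Δ := (LinearMap.BilinForm.toMatrix v B).det
  set χ := quadraticCharIn K R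
  set G := gaussSum χ ψ
  have hinner : ∑ t, ∑ x, ψ (u * B x x + t * (B b x - s)) =
      χ (u * Δ) * G ^ Fintype.card ι * ∑ t, ψ (-(B b b / (4 * u)) * t ^ 2 + -s * t) := by
    rw [Finset.mul_sum]
    refine Finset.sum_congr rfl fun t _ => ?_
    rw [show -(B b b / (4 * u)) * t ^ 2 + -s * t = -(t ^ 2 * B b b / (4 * u)) + -s * t by ring,
      AddChar.map_add_eq_mul, ← mul_assoc,
      ← sum_addChar_smul_bilin_self_add_linear hK hψ v hodd hB hB' hu b t, Finset.sum_mul]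
    refine Finset.sum_congr rfl fun x _ => ?_
    rw [← AddChar.map_add_eq_mul]
    ring_nf
  rw [hinner]
  rcases eq_or_ne (B b b) 0 with hc | hc
  · have hlinear : ∑ t, ψ (-s * t) = 0 := by
      simpa [hs, mul_comm] using AddChar.sum_mulShift (-s) hψ
    have hzero : χ 0 = 0 := MulChar.map_zero χ
    simp only [hc, zero_div, neg_zero, zero_mul, zero_add, hlinear, mul_zero, hzero]
  · have htwo : (2 : K) ≠ 0 := Ring.two_ne_zero hK
    have hfour : (4 : K) = 2 * 2 := by norm_num
    have ha : -(B b b / (4 * u)) ≠ 0 := by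
      rw [hfour]
      exact neg_ne_zero.2 (div_ne_zero hc (mul_ne_zero (mul_ne_zero htwo htwo) hu))
    have hsquare : χ (u * Δ) * χ (-(B b b / (4 * u))) = χ (-(Δ * B b b)) := by
      have harg : u * Δ * -(B b b / (4 * u)) = (2⁻¹ * 2⁻¹) * -(Δ * B b b) := by
        rw [hfour]
        field_simp
      rw [← map_mul, harg, map_mul, map_mul, quadraticCharIn_mul_self (inv_ne_zero htwo), one_mul]
    have hphase : -((-s) ^ 2 / (4 * -(B b b / (4 * u)))) = u * (s ^ 2 / B b b) := by
      rw [hfour]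
      field_simp
    rw [sum_addChar_quadratic hK hψ ha, hphase, ← hsquare]
    ring

end CharacterSums

section Counting

variable {K V ι : Type*} [Field K] [Fintype K] [AddCommGroup V] [Module K V]
  [Fintype ι] [DecidableEq ι]

lemma natCard_bilin_eq_and_bilin_self_eq_zero_mul_card_sq_eq_gaussSum {R : Type*} [CommRing R]
    [IsDomain R] {ψ : AddChar K R} (hK : ringChar K ≠ 2) (hψ : ψ.IsPrimitive) (v : Basis ι K V)
    (hodd : Odd (Fintype.card ι)) {B : BilinForm K V} (hB : B.IsSymm) (hB' : B.Nondegenerate)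
    {s : K} (hs : s ≠ 0) {b : V} (hb : b ≠ 0) :
    (Nat.card {x // B b x = s ∧ B x x = 0} : R) * (Fintype.card K : R) ^ 2 =
      (Fintype.card K : R) ^ Fintype.card ι -
        quadraticCharIn K R (-((LinearMap.BilinForm.toMatrix v B).det * B b b)) *
          gaussSum (quadraticCharIn K R) ψ ^ (Fintype.card ι + 1) := by
  have : FiniteDimensional K V := v.finiteDimensional_of_finite
  have : Finite V := Module.finite_of_finite K
  have : Fintype V := Fintype.ofFinite V
  have hφ : B b ≠ 0 := fun h => hb (hB'.1 b fun y => by rw [h, LinearMap.zero_apply])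
  set χ := quadraticCharIn K R
  set a := -((LinearMap.BilinForm.toMatrix v B).det * B b b) with ha
  set G := gaussSum χ ψ
  have hphase : χ a * ∑ u ∈ Finset.univ.erase 0, ψ (u * (s ^ 2 / B b b)) = -χ a := by
    rcases eq_or_ne (B b b) 0 with hc | hc
    · have hzero : χ a = 0 := by rw [ha, hc, mul_zero, neg_zero, MulChar.map_zero]
      rw [hzero, zero_mul, neg_zero]
    · rw [sum_erase_zero_addChar_mul_eq_neg_one hψ (div_ne_zero (pow_ne_zero 2 hs) hc),
        mul_neg_one]
  calc (Nat.card {x // B b x = s ∧ B x x = 0} : R) * (Fintype.card K : R) ^ 2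
      = ∑ u, ∑ t, ∑ x, ψ (u * B x x + t * (B b x - s)) := by
        rw [← natCard_common_zeros_mul_card_sq hψ]
        simp only [sub_eq_zero, and_comm]
    _ = (Fintype.card V : R) + ∑ u ∈ Finset.univ.erase 0,
          χ a * G ^ (Fintype.card ι + 1) * ψ (u * (s ^ 2 / B b b)) := by
        rw [← Finset.add_sum_erase _ _ (Finset.mem_univ 0)]
        simp only [zero_mul, zero_add, sum_sum_addChar_mul_linear_sub hψ hφ]
        exact congrArg _ <| Finset.sum_congr rfl fun u hu =>
          sum_sum_addChar_smul_bilin_self_add_linear_sub hK hψ v hodd hB hB'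
            (Finset.ne_of_mem_erase hu) b hs
    _ = (Fintype.card K : R) ^ Fintype.card ι - χ a * G ^ (Fintype.card ι + 1) := by
        rw [← Finset.mul_sum, mul_right_comm, hphase, Module.card_fintype v, Nat.cast_pow]
        ring

theorem natCard_bilin_eq_and_bilin_self_eq_zero_mul_card_sq (hK : ringChar K ≠ 2)
    (v : Basis ι K V) (hodd : Odd (Fintype.card ι)) {B : BilinForm K V} (hB : B.IsSymm)
    (hB' : B.Nondegenerate) {s : K} (hs : s ≠ 0) {b : V} (hb : b ≠ 0) :
    (Nat.card {x // B b x = s ∧ B x x = 0} : ℤ) * (Fintype.card K : ℤ) ^ 2 =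
      (Fintype.card K : ℤ) ^ Fintype.card ι -
        quadraticChar K (-((LinearMap.BilinForm.toMatrix v B).det * B b b)) *
          (quadraticChar K (-1) * Fintype.card K) ^ ((Fintype.card ι + 1) / 2) := by
  obtain ⟨ψ, hψ⟩ : ∃ ψ : AddChar K ℂ, ψ.IsPrimitive :=
    ⟨_, AddChar.FiniteField.primitiveChar_to_Complex_isPrimitive K⟩
  have hgauss : gaussSum (quadraticCharIn K ℂ) ψ ^ (Fintype.card ι + 1) =
      (quadraticCharIn K ℂ (-1) * Fintype.card K) ^ ((Fintype.card ι + 1) / 2) := by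
    rw [← gaussSum_quadraticCharIn_sq hK (by simp [ringChar.eq_zero]) hψ, ← pow_mul,
      Nat.mul_div_cancel' hodd.add_one.two_dvd]
  have hcount := natCard_bilin_eq_and_bilin_self_eq_zero_mul_card_sq_eq_gaussSum
    hK hψ v hodd hB hB' hs hb
  rw [hgauss] at hcount
  simp only [quadraticCharIn_apply] at hcount
  exact_mod_cast hcount

theorem stmt11_general {p e : ℕ} (hp : Odd p) (hcard : Fintype.card K = p ^ e)
    (hodd : Odd (Fintype.card ι)) (hthree : 3 ≤ Fintype.card ι)
    (v : Basis ι K V) {B : BilinForm K V} (hB : B.IsSymm) (hB' : B.Nondegenerate)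
    {s : K} (hs : s ≠ 0) {b : V} (hb : b ≠ 0) :
    (Nat.card {x // B b x = s ∧ B x x = 0} : ℤ) =
      (Fintype.card K : ℤ) ^ (Fintype.card ι - 2) -
        (-1) ^ (e * (p - 1) * (Fintype.card ι + 3) / 4) *
          qchar K ((LinearMap.BilinForm.toMatrix v B).det * B b b) *
            (Fintype.card K : ℤ) ^ ((Fintype.card ι - 3) / 2) := by
  have hK := ringChar_ne_two_of_card_eq_odd_pow hp hcard
  have hcount := natCard_bilin_eq_and_bilin_self_eq_zero_mul_card_sq hK v hodd hB hB' hs hb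
  rw [← quadraticChar_neg_one_pow_eq_neg_one_pow hp hcard hodd, qchar_eq_quadraticChar]
  obtain ⟨k, hk⟩ : ∃ k, Fintype.card ι = 2 * k + 3 := by
    obtain ⟨j, hj⟩ := hodd
    exact ⟨j - 1, by omega⟩
  have hq : (Fintype.card K : ℤ) ^ 2 ≠ 0 := pow_ne_zero 2 (Nat.cast_ne_zero.2 Fintype.card_ne_zero)
  rw [hk, show (2 * k + 3 + 1) / 2 = k + 2 by omega, neg_eq_neg_one_mul, map_mul] at hcount
  rw [hk, show 2 * k + 3 - 2 = 2 * k + 1 by omega, show (2 * k + 3 + 3) / 2 = k + 3 by omega,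
    show (2 * k + 3 - 3) / 2 = k by omega]
  refine mul_right_cancel₀ hq ?_
  rw [hcount]
  ring

end Counting

theorem isSquare_of_isSquare_algebraMap {K L : Type*} [Field K] [Field L] [Algebra K L]
    (hodd : Odd (finrank K L)) {d : K} (hd : IsSquare (algebraMap K L d)) : IsSquare d := by
  obtain ⟨y, hy⟩ := hd
  have : FiniteDimensional K L := Module.finite_of_finrank_pos hodd.pos
  have hle : (minpoly K y).natDegree ≤ 2 := by
    rw [← Polynomial.natDegree_X_pow_sub_C (n := 2) (r := d)]
    refine Polynomial.natDegree_le_of_dvd (minpoly.dvd K y ?_)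
      (Polynomial.X_pow_sub_C_ne_zero two_pos d)
    simp [hy, sq]
  have hdvd : (minpoly K y).natDegree ∣ finrank K L :=
    minpoly.degree_dvd (Algebra.IsIntegral.isIntegral y)
  have hone : (minpoly K y).natDegree = 1 := by
    have := hodd.of_dvd_nat hdvd
    grind
  obtain ⟨z, rfl⟩ := minpoly.natDegree_eq_one_iff.1 hone
  exact ⟨z, (algebraMap K L).injective (by rw [hy, map_mul])⟩

theorem isSquare_algebraMap_discr {K L ι : Type*} [Field K] [Field L] [Algebra K L]
    [IsGalois K L] [Fintype ι] [DecidableEq ι] (v : Basis ι K L) :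
    IsSquare (algebraMap K L (Algebra.discr K v)) := by
  have : FiniteDimensional K L := v.finiteDimensional_of_finite
  have e : ι ≃ Gal(L/K) := Fintype.equivOfCardEq <| by
    rw [← Nat.card_eq_fintype_card (α := Gal(L/K)), IsGalois.card_aut_eq_finrank,
      Module.finrank_eq_card_basis v]
  let M : Matrix ι ι L := Matrix.of fun i j => e i (v j)
  have hM : (Algebra.traceMatrix K v).map (algebraMap K L) = M.transpose * M := by
    ext i j
    simp only [Matrix.map_apply, Algebra.traceMatrix_apply, Algebra.traceForm_apply,
      trace_eq_sum_automorphisms, Matrix.mul_apply, Matrix.transpose_apply, Matrix.of_apply,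
      map_mul, M]
    exact (e.sum_comp fun σ => σ (v i) * σ (v j)).symm
  refine ⟨M.det, ?_⟩
  rw [Algebra.discr_def, RingHom.map_det, RingHom.mapMatrix_apply, hM, Matrix.det_mul,
    Matrix.det_transpose]

lemma qchar_discr_mul_of_odd_finrank {K L ι : Type*} [Field K] [Finite K] [Field L]
    [Algebra K L] [Fintype ι] [DecidableEq ι] (hodd : Odd (finrank K L)) (v : Basis ι K L) (c : K) :
    qchar K (Algebra.discr K v * c) = qchar K c := by
  have : FiniteDimensional K L := v.finiteDimensional_of_finite
  have : Fintype K := Fintype.ofFinite K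
  have : Finite L := Module.finite_of_finite K
  obtain ⟨d, hd⟩ := isSquare_of_isSquare_algebraMap hodd (isSquare_algebraMap_discr v)
  have hd' : d ≠ 0 := by
    rintro rfl
    exact Algebra.discr_not_zero_of_basis K v (by rw [hd, zero_mul])
  rw [hd, qchar_eq_quadraticChar, qchar_eq_quadraticChar, quadraticChar_mul_self_mul hd']

theorem stmt11 (p e q m l : ℕ) (hp : p.Prime) (hodd : Odd p) (he : 0 < e)
    (hq : q = p ^ e) (hmodd : Odd m) (hm3 : 3 ≤ m)
    (hl : l = e * (p - 1) * (m + 3) / 4)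
    (Fq Fm : Type) [Field Fq] [Field Fm] [Fintype Fq] [Fintype Fm] [Algebra Fq Fm]
    (hcq : Fintype.card Fq = q) (hcm : Fintype.card Fm = q ^ m)
    (s : Fq) (hs : s ≠ 0) (b : Fm) (hb : b ≠ 0)
    (Ns : ℕ)
    (hNs : Ns = Nat.card {x : Fm //
      Algebra.trace Fq Fm (b * x) = s ∧ Algebra.trace Fq Fm (x ^ 2) = 0}) :
    (Algebra.trace Fq Fm (b ^ 2) = 0 → Ns = q ^ (m - 2)) ∧
    (Algebra.trace Fq Fm (b ^ 2) ≠ 0 →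
      (Ns : ℤ) = (q : ℤ) ^ (m - 2)
        - (-1) ^ l * qchar Fq (Algebra.trace Fq Fm (b ^ 2)) * (q : ℤ) ^ ((m - 3) / 2)) := by
  have hrank : finrank Fq Fm = m := by
    rw [← hcq, Module.card_eq_pow_finrank (K := Fq)] at hcm
    exact Nat.pow_right_injective Fintype.one_lt_card hcm
  have hcount := stmt11_general hodd (hcq.trans hq) (by rwa [Fintype.card_fin, hrank])
    (by rwa [Fintype.card_fin, hrank]) (Module.finBasis Fq Fm) (Algebra.traceForm_isSymm Fq)
    (traceForm_nondegenerate Fq Fm) hs hb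
  rw [← Algebra.traceMatrix_of_basis, ← Algebra.discr_def,
    qchar_discr_mul_of_odd_finrank (hrank ▸ hmodd)] at hcount
  simp only [Algebra.traceForm_apply, ← sq, ← hNs, Fintype.card_fin, hrank, hcq, ← hl] at hcount
  refine ⟨fun hc => ?_, fun _ => hcount⟩
  rw [hc, qchar, if_pos rfl, mul_zero, zero_mul, sub_zero] at hcount
  exact_mod_cast hcount
end
end
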